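/- arXiv:1705.00858 — 5 statements merged into one kernel-verified Lean document; each statement's English description precedes it below -/
import Mathlib

section
/- Let h be a gauge function for which there exists a constant D > 0 such that D·h(w,δ) > h(w,2δ) for all w ∈ ℝ and δ > 0. Let {I_j} be a Cantor construction with I_∅ ⊆ [0,1] satisfying 2·max(|I_{j0}|, |I_{j1}|) ≤ |I_j| for every binary word j, let C be its Cantor set and ν its Cantor measure, and suppose there exist constants q, r > 0 such that q·ν(I_j) ≤ h(I_j) ≤ r·ν(I_j) for every binary word j. Then for every closed interval J ⊆ [0,1] one has (q/(2D²))·ν(J) ≤ μ_h(J ∩ C) ≤ r·ν(J); in particular 0 < μ_h(C) < ∞, so μ_h is a mass distribution on C. -/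
open MeasureTheory Set Filter
open scoped ENNReal

noncomputable section

/-- `Iv w δ` is the closed interval with midpoint `w` and diameter `δ`. -/
def Iv (w δ : ℝ) : Set ℝ := Set.Icc (w - δ / 2) (w + δ / 2)

/-- A Cantor construction on `ℝ`: a family of nonempty closed intervals
`I j = [a j, b j]` indexed by finite binary words `j : List Bool`, such that
`I (j ++ [false])` and `I (j ++ [true])` are disjoint subsets of `I j` sharing,
respectively, the left and the right endpoint with `I j`, and such that the
maximal diameter at level `n` tends to `0`. -/
structure CantorConstruction where
  a : List Bool → ℝ
  b : List Bool → ℝ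
  le : ∀ j, a j ≤ b j
  left0 : ∀ j, a (j ++ [false]) = a j
  right1 : ∀ j, b (j ++ [true]) = b j
  sub0 : ∀ j, b (j ++ [false]) ≤ b j
  sub1 : ∀ j, a j ≤ a (j ++ [true])
  disj : ∀ j, b (j ++ [false]) < a (j ++ [true])
  shrink : ∀ ε > (0 : ℝ), ∃ N : ℕ, ∀ j : List Bool, N ≤ j.length → b j - a j < ε

namespace CantorConstruction

variable (C : CantorConstruction)

/-- The basic interval `I_j`. -/
def I (j : List Bool) : Set ℝ := Set.Icc (C.a j) (C.b j)

/-- The diameter `|I_j|` of the basic interval `I_j`. -/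
def len (j : List Bool) : ℝ := C.b j - C.a j

/-- The midpoint of the basic interval `I_j`. -/
def mid (j : List Bool) : ℝ := (C.a j + C.b j) / 2

/-- The gap `G_j = I_j \ (I_{j0} ∪ I_{j1})`. -/
def gap (j : List Bool) : Set ℝ :=
  Set.Ioo (C.b (j ++ [false])) (C.a (j ++ [true]))

/-- The diameter `|G_j|` of the gap `G_j`. -/
def gapLen (j : List Bool) : ℝ := C.a (j ++ [true]) - C.b (j ++ [false])

/-- The Cantor set `C = ⋂_n ⋃_{|j| = n} I_j` associated to the construction. -/
def cantorSet : Set ℝ := ⋂ n : ℕ, ⋃ j ∈ {j : List Bool | j.length = n}, C.I j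

/-- `ν` is the Cantor measure of the construction: a Borel probability measure on `ℝ`
with `ν (I_j) = 2^{-|j|}` for every binary word `j`. -/
def IsCantorMeasure (ν : Measure ℝ) : Prop :=
  IsProbabilityMeasure ν ∧ ∀ j : List Bool, ν (C.I j) = (2 ^ j.length : ℝ≥0∞)⁻¹

end CantorConstruction

/-- `word k l` is the length-`k` binary expansion of `l` (most significant digit first),
so that `I_l^k = I (word k l)` in the step/position indexing. -/
def word : ℕ → ℕ → List Bool
  | 0, _ => []
  | k + 1, l => word k (l / 2) ++ [decide (l % 2 = 1)]

/-- `h : ℝ × (0,∞) → (0,∞)` is a gauge function: continuous, positive,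
`h (w, δ) → 0` as `δ → 0` for every `w`, and increasing as an interval function. -/
def IsGauge (h : ℝ → ℝ → ℝ) : Prop :=
  ContinuousOn (Function.uncurry h) {p : ℝ × ℝ | 0 < p.2} ∧
  (∀ w δ : ℝ, 0 < δ → 0 < h w δ) ∧
  (∀ w : ℝ, Tendsto (h w) (nhdsWithin 0 (Set.Ioi 0)) (nhds 0)) ∧
  (∀ w δ w' δ' : ℝ, 0 < δ → 0 < δ' → Iv w δ ⊆ Iv w' δ' → h w δ ≤ h w' δ')

/-- The generalized Hausdorff measure `μ_h` associated to a gauge function `h`: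
`μ_h(E) = lim_{δ → 0} inf { Σ_k h (w_k, δ_k) }`, the infimum being over countable
covers of `E` by intervals `Iv w_k δ_k` with `0 < δ_k ≤ δ`. -/
def muH (h : ℝ → ℝ → ℝ) (E : Set ℝ) : ℝ≥0∞ :=
  ⨆ (δ : ℝ) (_ : 0 < δ),
    ⨅ (c : ℕ → ℝ × ℝ)
      (_ : (∀ k, 0 < (c k).2 ∧ (c k).2 ≤ δ) ∧ E ⊆ ⋃ k, Iv (c k).1 (c k).2),
      ∑' k, ENNReal.ofReal (h (c k).1 (c k).2)

/-- Second partial derivative `∂²h/∂w²`. -/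
def d11 (h : ℝ → ℝ → ℝ) (w δ : ℝ) : ℝ :=
  deriv (fun x => deriv (fun y => h y δ) x) w

/-- Mixed second partial derivative `∂²h/∂w∂δ`. -/
def d12 (h : ℝ → ℝ → ℝ) (w δ : ℝ) : ℝ :=
  deriv (fun x => deriv (fun d => h x d) δ) w

/-- Second partial derivative `∂²h/∂δ²`. -/
def d22 (h : ℝ → ℝ → ℝ) (w δ : ℝ) : ℝ :=
  deriv (fun d => deriv (fun e => h w e) d) δ

end

/-!
Both bounds come from comparing `ν` with `h` on intervals.

*Upper bound.* For large `n`, the basic intervals of level `n` that meet `J` cover `J ∩ C`, are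
pairwise disjoint and lie in a small thickening of `J`. Since `h(I_j) ≤ r ν(I_j)`, the sum of their
gauges is at most `r` times the `ν`-measure of that thickening, which tends to `ν(J)` because `J` is
closed (`muH_le`).

*Lower bound.* It suffices to prove `ν(K) ≤ (2D²/q) h(K)` for every interval `K` and to sum over a
cover, because `ν` is carried by `C`. Let `4K` be the interval concentric with `K` of four times its
length. As long as `4K` contains no basic interval of level less than `n`, up to a `ν`-null set `K`
is contained in at most two basic intervals of level `n` (`exists_pair`), so `ν(K) ≤ 2 · 2^{-n}`.
The reason is that if `K` reaches across two basic intervals `I_j < I_{j'}` and also meets both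
children of `I_j`, then `|I_j| - |I_{j0}| ≤ |K|`; as `|I_{j0}| ≤ |I_j| / 2`, this forces
`|I_{j0}| ≤ |K|` and hence `I_j ⊆ 4K`. Now let `n` be the least level at which `4K` contains a basic
interval `I_j`. Then `D² h(K) ≥ h(4K) ≥ h(I_j) ≥ q 2^{-n} ≥ (q/2) ν(K)`. If there is no such level,
then `ν(K) = 0`.
-/

namespace CantorConstruction

variable (C : CantorConstruction)

lemma len_pos (j : List Bool) : 0 < C.len j := by
  have h1 := C.le (j ++ [false])
  have h2 := C.le (j ++ [true])
  have h3 := C.left0 j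
  have h4 := C.right1 j
  have h5 := C.disj j
  unfold len
  linarith

lemma I_child_subset (j : List Bool) (x : Bool) : C.I (j ++ [x]) ⊆ C.I j := by
  cases x
  · exact Icc_subset_Icc (C.left0 j).ge (C.sub0 j)
  · exact Icc_subset_Icc (C.sub1 j) (C.right1 j).le

lemma disjoint_children (j : List Bool) :
    Disjoint (C.I (j ++ [false])) (C.I (j ++ [true])) := by
  rw [Set.disjoint_left]
  intro x hx hx'
  exact absurd (hx'.1.trans hx.2) (not_le.mpr (C.disj j))

lemma Iv_mid_len (j : List Bool) : Iv (C.mid j) (C.len j) = C.I j := by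
  unfold Iv mid len I
  congr 1 <;> ring

/-- Distinct basic intervals of the same level are disjoint. -/
lemma disjoint_of_length_eq (n : ℕ) : ∀ i j : List Bool, i.length = n → j.length = n → i ≠ j →
    Disjoint (C.I i) (C.I j) := by
  induction n with
  | zero =>
    intro i j hi hj hij
    rw [List.length_eq_zero_iff] at hi hj
    exact absurd (hi.trans hj.symm) hij
  | succ n ih =>
    intro i j hi hj hij
    rcases List.eq_nil_or_concat i with rfl | ⟨i', x, rfl⟩
    · simp at hi
    rcases List.eq_nil_or_concat j with rfl | ⟨j', y, rfl⟩
    · simp at hj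
    simp only [List.concat_eq_append, List.length_append, List.length_cons, List.length_nil,
      zero_add, Nat.add_right_cancel_iff] at hi hj hij ⊢
    by_cases hij' : i' = j'
    · subst hij'
      cases x <;> cases y
      · exact absurd rfl hij
      · exact C.disjoint_children i'
      · exact (C.disjoint_children i').symm
      · exact absurd rfl hij
    · exact (ih i' j' hi hj hij').mono (C.I_child_subset i' x) (C.I_child_subset j' y)

variable {C} {ν : Measure ℝ}

lemma IsCantorMeasure.diff_children (hν : C.IsCantorMeasure ν) (j : List Bool) :
    ν (C.I j \ (C.I (j ++ [false]) ∪ C.I (j ++ [true]))) = 0 := by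
  have := hν.1
  have hm : ∀ i, MeasurableSet (C.I i) := fun i => measurableSet_Icc
  rw [measure_sdiff (union_subset (C.I_child_subset j _) (C.I_child_subset j _))
    ((hm _).union (hm _)).nullMeasurableSet (measure_ne_top _ _),
    measure_union (C.disjoint_children j) (hm _), hν.2, hν.2, hν.2]
  simp only [List.length_append, List.length_cons, List.length_nil, zero_add]
  rw [pow_succ, ENNReal.mul_inv (by simp) (by simp), ← mul_add, ENNReal.inv_two_add_inv_two,
    mul_one, tsub_self]

/-- A point outside `C` is outside `I_∅` or lies in the gap of some basic interval, and there are
only countably many gaps, each of them `ν`-null. -/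
lemma IsCantorMeasure.compl_cantorSet (hν : C.IsCantorMeasure ν) : ν C.cantorSetᶜ = 0 := by
  have := hν.1
  have h0 : ν (C.I [])ᶜ = 0 := by
    rw [prob_compl_eq_zero_iff (show MeasurableSet (C.I []) from measurableSet_Icc), hν.2]
    simp
  have hsub : C.cantorSetᶜ ⊆ (C.I [])ᶜ ∪
      ⋃ j : List Bool, C.I j \ (C.I (j ++ [false]) ∪ C.I (j ++ [true])) := by
    intro x hx
    by_contra hcon
    simp only [mem_union, mem_iUnion, not_or, mem_compl_iff, not_not, not_exists, Set.mem_sdiff,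
      not_and] at hcon
    obtain ⟨hx0, hstep⟩ := hcon
    apply hx
    simp only [cantorSet, mem_iInter, mem_iUnion, mem_ofPred_eq, exists_prop]
    intro n
    induction n with
    | zero => exact ⟨[], rfl, hx0⟩
    | succ n ih =>
      obtain ⟨j, hj, hxj⟩ := ih
      by_cases hf : x ∈ C.I (j ++ [false])
      · exact ⟨j ++ [false], by simp [hj], hf⟩
      · exact ⟨j ++ [true], by simp [hj], hstep j hxj hf⟩
  refine measure_mono_null hsub (measure_union_null h0 (measure_iUnion_null fun j => ?_))
  exact hν.diff_children j

/-- If the concentric interval of four times the length of `[x, y]` contains no basic interval of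
level less than `n`, then up to a `ν`-null set `[x, y]` is contained in two basic intervals of
level `n`, which are either equal or ordered from left to right and both met by `[x, y]`. -/
lemma exists_pair (hν : C.IsCantorMeasure ν)
    (hsplit : ∀ j : List Bool,
      2 * max (C.len (j ++ [false])) (C.len (j ++ [true])) ≤ C.len j)
    (x y : ℝ) (n : ℕ)
    (hn : ∀ j : List Bool, j.length < n →
      ¬ C.I j ⊆ Icc (x - 3 / 2 * (y - x)) (y + 3 / 2 * (y - x))) :
    ∃ i j : List Bool, i.length = n ∧ j.length = n ∧ ν (Icc x y \ (C.I i ∪ C.I j)) = 0 ∧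
      (i = j ∨ (x ≤ C.b i ∧ C.b i < C.a j ∧ C.a j ≤ y)) := by
  have := hν.1
  induction n with
  | zero =>
    refine ⟨[], [], rfl, rfl, ?_, Or.inl rfl⟩
    refine measure_mono_null (t := (C.I [])ᶜ) ?_ ?_
    · intro z hz
      simpa using hz.2
    · rw [prob_compl_eq_zero_iff (show MeasurableSet (C.I []) from measurableSet_Icc), hν.2]
      simp
  | succ n ih =>
    obtain ⟨i, j, hi, hj, hnull, hcase⟩ := ih fun j hj => hn j (hj.trans (Nat.lt_succ_self n))
    -- Up to a null set, `[x, y]` is contained in the four children of `I_i` and `I_j`.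
    have hnull' : ν ((Icc x y \ (C.I i ∪ C.I j)) ∪
        ((C.I i \ (C.I (i ++ [false]) ∪ C.I (i ++ [true]))) ∪
          (C.I j \ (C.I (j ++ [false]) ∪ C.I (j ++ [true]))))) = 0 :=
      measure_union_null hnull (measure_union_null (hν.diff_children i) (hν.diff_children j))
    have hleft : ∀ k : List Bool, C.b (k ++ [false]) < x → ∀ z ∈ Icc x y,
        z ∉ C.I (k ++ [false]) :=
      fun k hk z hz hzk => absurd (hz.1.trans hzk.2) (not_le.mpr hk)
    have hright : ∀ k : List Bool, y < C.a (k ++ [true]) → ∀ z ∈ Icc x y,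
        z ∉ C.I (k ++ [true]) :=
      fun k hk z hz hzk => absurd (hzk.1.trans hz.2) (not_le.mpr hk)
    rcases hcase with rfl | ⟨h1, h2, h3⟩
    · by_cases hx : x ≤ C.b (i ++ [false])
      · by_cases hy : C.a (i ++ [true]) ≤ y
        · refine ⟨i ++ [false], i ++ [true], by simp [hi], by simp [hi], ?_,
            Or.inr ⟨hx, C.disj i, hy⟩⟩
          refine measure_mono_null ?_ hnull'
          intro z hz
          simp only [mem_union, Set.mem_sdiff] at hz ⊢
          tauto
        · refine ⟨i ++ [false], i ++ [false], by simp [hi], by simp [hi], ?_, Or.inl rfl⟩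
          refine measure_mono_null ?_ hnull'
          intro z hz
          have := hright i (not_le.mp hy) z hz.1
          simp only [mem_union, Set.mem_sdiff] at hz ⊢
          tauto
      · refine ⟨i ++ [true], i ++ [true], by simp [hi], by simp [hi], ?_, Or.inl rfl⟩
        refine measure_mono_null ?_ hnull'
        intro z hz
        have := hleft i (not_le.mp hx) z hz.1
        simp only [mem_union, Set.mem_sdiff] at hz ⊢
        tauto
    · have hx : C.b (i ++ [false]) < x := by
        by_contra hx
        rw [not_lt] at hx
        apply hn i (by omega)
        have hs := hsplit i
        have hm := le_max_left (C.len (i ++ [false])) (C.len (i ++ [true]))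
        have ha := C.left0 i
        have hxy : x ≤ y := by linarith
        unfold len at hs hm
        exact Icc_subset_Icc (by linarith) (by linarith)
      have hy : y < C.a (j ++ [true]) := by
        by_contra hy
        rw [not_lt] at hy
        apply hn j (by omega)
        have hs := hsplit j
        have hm := le_max_right (C.len (j ++ [false])) (C.len (j ++ [true]))
        have hb := C.right1 j
        have hxy : x ≤ y := by linarith
        unfold len at hs hm
        exact Icc_subset_Icc (by linarith) (by linarith)
      refine ⟨i ++ [true], j ++ [false], by simp [hi], by simp [hj], ?_,
        Or.inr ⟨by rwa [C.right1], by rwa [C.right1, C.left0], by rwa [C.left0]⟩⟩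
      refine measure_mono_null ?_ hnull'
      intro z hz
      have hz1 := hleft i hx z hz.1
      have hz2 := hright j hy z hz.1
      simp only [mem_union, Set.mem_sdiff] at hz ⊢
      tauto

/-- Under the hypotheses of `exists_pair`, `ν [x, y] ≤ 2 · 2^{-n}`. -/
lemma measure_Icc_le (hν : C.IsCantorMeasure ν)
    (hsplit : ∀ j : List Bool,
      2 * max (C.len (j ++ [false])) (C.len (j ++ [true])) ≤ C.len j)
    (x y : ℝ) (n : ℕ)
    (hn : ∀ j : List Bool, j.length < n →
      ¬ C.I j ⊆ Icc (x - 3 / 2 * (y - x)) (y + 3 / 2 * (y - x))) :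
    ν (Icc x y) ≤ ENNReal.ofReal (2 * (1 / 2) ^ n) := by
  obtain ⟨i, j, hi, hj, hnull, -⟩ := exists_pair hν hsplit x y n hn
  have hpow : (2 ^ n : ℝ≥0∞)⁻¹ = ENNReal.ofReal ((1 / 2) ^ n) := by
    rw [one_div, inv_pow, ENNReal.ofReal_inv_of_pos (by positivity),
      ENNReal.ofReal_pow (by norm_num)]
    simp
  calc ν (Icc x y) ≤ ν ((Icc x y \ (C.I i ∪ C.I j)) ∪ (C.I i ∪ C.I j)) :=
        measure_mono (by simp)
    _ ≤ ν (Icc x y \ (C.I i ∪ C.I j)) + (ν (C.I i) + ν (C.I j)) :=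
        (measure_union_le _ _).trans (add_le_add_right (measure_union_le _ _) _)
    _ = ENNReal.ofReal (2 * (1 / 2) ^ n) := by
        rw [hnull, hν.2, hν.2, hi, hj, hpow, zero_add, ← ENNReal.ofReal_add (by positivity)
          (by positivity), two_mul]

lemma IsCantorMeasure.toReal_I (hν : C.IsCantorMeasure ν) (j : List Bool) :
    (ν (C.I j)).toReal = (1 / 2) ^ j.length := by
  rw [hν.2]
  simp

/-- The estimate `(q / (2D²)) ν(K) ≤ h(K)` for every closed interval `K`. -/
lemma mul_measure_Iv_le {h : ℝ → ℝ → ℝ} (hg : IsGauge h)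
    {D : ℝ} (hD : 0 < D) (hDh : ∀ w δ : ℝ, 0 < δ → h w (2 * δ) < D * h w δ)
    (hsplit : ∀ j : List Bool,
      2 * max (C.len (j ++ [false])) (C.len (j ++ [true])) ≤ C.len j)
    (hν : C.IsCantorMeasure ν) {q : ℝ} (hq : 0 < q)
    (hqh : ∀ j : List Bool, q * (ν (C.I j)).toReal ≤ h (C.mid j) (C.len j))
    (w δ : ℝ) (hδ : 0 < δ) :
    ENNReal.ofReal (q / (2 * D ^ 2)) * ν (Iv w δ) ≤ ENNReal.ofReal (h w δ) := by
  classical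
  have hbig : Icc ((w - δ / 2) - 3 / 2 * ((w + δ / 2) - (w - δ / 2)))
      ((w + δ / 2) + 3 / 2 * ((w + δ / 2) - (w - δ / 2))) = Iv w (2 * (2 * δ)) := by
    unfold Iv
    congr 1 <;> ring
  have key := measure_Icc_le hν hsplit (w - δ / 2) (w + δ / 2)
  rw [hbig] at key
  by_cases hex : ∃ n, ∃ j : List Bool, j.length = n ∧ C.I j ⊆ Iv w (2 * (2 * δ))
  · obtain ⟨j, hj, hjs⟩ := Nat.find_spec hex
    have hK := key (Nat.find hex) fun i hi his => Nat.find_min hex hi ⟨i, rfl, his⟩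
    have h1 : q * (1 / 2) ^ Nat.find hex ≤ D ^ 2 * h w δ := by
      have e1 := hqh j
      rw [hν.toReal_I, hj] at e1
      have e2 : h (C.mid j) (C.len j) ≤ h w (2 * (2 * δ)) :=
        hg.2.2.2 _ _ _ _ (C.len_pos j) (by positivity) (by rwa [C.Iv_mid_len])
      have e3 := hDh w (2 * δ) (by positivity)
      have e4 := mul_lt_mul_of_pos_left (hDh w δ hδ) hD
      nlinarith
    calc ENNReal.ofReal (q / (2 * D ^ 2)) * ν (Iv w δ)
        ≤ ENNReal.ofReal (q / (2 * D ^ 2)) * ENNReal.ofReal (2 * (1 / 2) ^ Nat.find hex) := by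
          gcongr
          exact hK
      _ = ENNReal.ofReal (q / (2 * D ^ 2) * (2 * (1 / 2) ^ Nat.find hex)) :=
          (ENNReal.ofReal_mul (by positivity)).symm
      _ ≤ ENNReal.ofReal (h w δ) := by
          apply ENNReal.ofReal_le_ofReal
          rw [div_mul_eq_mul_div, div_le_iff₀ (by positivity)]
          linarith
  · push Not at hex
    have hlim : Tendsto (fun n : ℕ => ENNReal.ofReal (2 * (1 / 2) ^ n)) atTop (nhds 0) := by
      have := (tendsto_pow_atTop_nhds_zero_of_lt_one (r := (1 / 2 : ℝ)) (by norm_num)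
        (by norm_num)).const_mul 2
      simpa using ENNReal.tendsto_ofReal this
    have h0 : ν (Iv w δ) ≤ 0 :=
      ge_of_tendsto' hlim fun n => key n fun i _ => hex i.length i rfl
    rw [le_zero_iff.mp h0, mul_zero]
    exact zero_le

/-- Passing from intervals to covers: `c ν(E) ≤ μ_h(E ∩ C)` once `c ν(K) ≤ h(K)` for all `K`. -/
lemma mul_measure_le_muH {h : ℝ → ℝ → ℝ} (hν : C.IsCantorMeasure ν) {c : ℝ≥0∞}
    (hc : ∀ w δ : ℝ, 0 < δ → c * ν (Iv w δ) ≤ ENNReal.ofReal (h w δ)) (E : Set ℝ) :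
    c * ν E ≤ muH h (E ∩ C.cantorSet) := by
  refine le_trans ?_ (le_iSup₂ (1 : ℝ) one_pos)
  refine le_iInf₂ fun f hf => ?_
  calc c * ν E ≤ c * ν (⋃ k, Iv (f k).1 (f k).2) := by
        refine mul_le_mul_right ?_ c
        calc ν E ≤ ν (E ∩ C.cantorSet ∪ C.cantorSetᶜ) := measure_mono fun z hz => by
              by_cases hzC : z ∈ C.cantorSet
              · exact Or.inl ⟨hz, hzC⟩
              · exact Or.inr hzC
          _ ≤ ν (E ∩ C.cantorSet) + ν C.cantorSetᶜ := measure_union_le _ _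
          _ = ν (E ∩ C.cantorSet) := by rw [hν.compl_cantorSet, add_zero]
          _ ≤ _ := measure_mono hf.2
    _ ≤ c * ∑' k, ν (Iv (f k).1 (f k).2) := by
        gcongr
        exact measure_iUnion_le _
    _ = ∑' k, c * ν (Iv (f k).1 (f k).2) := ENNReal.tsum_mul_left.symm
    _ ≤ _ := ENNReal.tsum_le_tsum fun k => hc _ _ (hf.1 k).1

/-- The upper bound `μ_h(J ∩ C) ≤ r ν(J)` for closed `J`. -/
lemma muH_le {h : ℝ → ℝ → ℝ} (hg : IsGauge h) (hν : C.IsCantorMeasure ν) {r : ℝ} (hr : 0 < r)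
    (hhr : ∀ j : List Bool, h (C.mid j) (C.len j) ≤ r * (ν (C.I j)).toReal)
    {J : Set ℝ} (hJ : IsClosed J) :
    muH h (J ∩ C.cantorSet) ≤ ENNReal.ofReal r * ν J := by
  classical
  have := hν.1
  refine iSup₂_le fun δ hδ => ?_
  have hlim : Tendsto (fun ε : ℝ => ENNReal.ofReal r * ν (Metric.cthickening ε J) +
      ENNReal.ofReal ε) (nhdsWithin 0 (Ioi 0)) (nhds (ENNReal.ofReal r * ν J)) := by
    have t1 : Tendsto (fun ε : ℝ => ν (Metric.cthickening ε J)) (nhds 0) (nhds (ν J)) :=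
      tendsto_measure_cthickening_of_isClosed ⟨1, one_pos, measure_ne_top _ _⟩ hJ
    have t2 : Tendsto (fun ε : ℝ => ENNReal.ofReal ε) (nhds 0) (nhds 0) := by
      simpa using ENNReal.tendsto_ofReal (tendsto_id (α := ℝ) (x := nhds 0))
    have t3 := (ENNReal.Tendsto.const_mul t1 (Or.inr (ENNReal.ofReal_ne_top (r := r)))).add t2
    rw [add_zero] at t3
    exact t3.mono_left nhdsWithin_le_nhds
  refine ge_of_tendsto hlim (eventually_nhdsWithin_of_forall fun ε (hε : 0 < ε) => ?_)
  obtain ⟨N, hN⟩ := C.shrink (min ε δ) (lt_min hε hδ)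
  -- The words of level `N` whose interval meets `J`; every other word is assigned an interval of
  -- tiny gauge, so that the cover is indexed by the denumerable type of all words.
  let S : Set (List Bool) := {j | j.length = N ∧ (C.I j ∩ J).Nonempty}
  obtain ⟨e, he, hesum⟩ := ENNReal.exists_pos_sum_of_countable
    (ENNReal.ofReal_pos.mpr hε).ne' (List Bool)
  have ht : ∀ j : List Bool, ∃ t : ℝ, 0 < t ∧ t ≤ δ ∧ ENNReal.ofReal (h 0 t) ≤ e j := by
    intro j
    have h1 : ∀ᶠ t in nhdsWithin (0 : ℝ) (Ioi 0), h 0 t < e j :=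
      (hg.2.2.1 0).eventually_lt_const (by exact_mod_cast he j)
    have h2 : ∀ᶠ t in nhdsWithin (0 : ℝ) (Ioi 0), t ∈ Ioc 0 δ := Ioc_mem_nhdsGT hδ
    obtain ⟨t, ht1, ht2⟩ := (h1.and h2).exists
    exact ⟨t, ht2.1, ht2.2, ENNReal.ofReal_le_of_le_toReal (by simpa using ht1.le)⟩
  choose t ht0 htδ hte using ht
  let g : List Bool → ℝ × ℝ := fun j => if j ∈ S then (C.mid j, C.len j) else (0, t j)
  let U : List Bool → Set ℝ := fun j => if j ∈ S then C.I j else ∅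
  obtain ⟨φ⟩ : Nonempty (ℕ ≃ List Bool) := nonempty_equiv_of_countable
  refine iInf₂_le_of_le (fun k => g (φ k)) ⟨fun k => ?_, ?_⟩ ?_
  · simp only [g]
    split_ifs with hS
    · exact ⟨C.len_pos _, (hN _ hS.1.ge).le.trans (min_le_right _ _)⟩
    · exact ⟨ht0 _, htδ _⟩
  · rintro z ⟨hzJ, hzC⟩
    simp only [cantorSet, mem_iInter, mem_iUnion, mem_ofPred_eq, exists_prop] at hzC
    obtain ⟨j, hj, hzj⟩ := hzC N
    have hjS : j ∈ S := ⟨hj, z, hzj, hzJ⟩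
    refine mem_iUnion.mpr ⟨φ.symm j, ?_⟩
    simpa only [g, Equiv.apply_symm_apply, if_pos hjS, C.Iv_mid_len] using hzj
  · rw [φ.tsum_eq fun j => ENNReal.ofReal (h (g j).1 (g j).2)]
    have hUd : Pairwise (Function.onFun Disjoint U) := by
      intro i j hij
      simp only [Function.onFun, U]
      split_ifs with hi hj
      · exact C.disjoint_of_length_eq N i j hi.1 hj.1 hij
      all_goals simp
    have hUm : ∀ j, MeasurableSet (U j) := by
      intro j
      simp only [U]
      split_ifs
      · exact measurableSet_Icc
      · exact MeasurableSet.empty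
    have hUJ : (⋃ j, U j) ⊆ Metric.cthickening ε J := by
      refine iUnion_subset fun j => ?_
      simp only [U]
      split_ifs with hj
      · obtain ⟨hjN, p, hpI, hpJ⟩ := hj
        intro z hz
        refine Metric.mem_cthickening_of_dist_le z p ε J hpJ ?_
        have := (hN j hjN.ge).le.trans (min_le_left _ _)
        exact (Real.dist_le_of_mem_Icc hz hpI).trans this
      · exact empty_subset _
    calc ∑' j, ENNReal.ofReal (h (g j).1 (g j).2)
        ≤ ∑' j, (ENNReal.ofReal r * ν (U j) + e j) := by
          refine ENNReal.tsum_le_tsum fun j => ?_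
          simp only [g, U]
          split_ifs with hj
          · refine le_trans ?_ le_self_add
            calc ENNReal.ofReal (h (C.mid j) (C.len j))
                ≤ ENNReal.ofReal (r * (ν (C.I j)).toReal) := ENNReal.ofReal_le_ofReal (hhr j)
              _ = ENNReal.ofReal r * ν (C.I j) := by
                  rw [ENNReal.ofReal_mul hr.le, ENNReal.ofReal_toReal (measure_ne_top _ _)]
          · exact (hte j).trans le_add_self
      _ = ENNReal.ofReal r * ν (⋃ j, U j) + ∑' j, (e j : ℝ≥0∞) := by
          rw [ENNReal.tsum_add, ENNReal.tsum_mul_left, measure_iUnion hUd hUm]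
      _ ≤ ENNReal.ofReal r * ν (Metric.cthickening ε J) + ENNReal.ofReal ε := by
          gcongr

end CantorConstruction

/-- If `h` is a gauge function with `D · h(w,δ) > h(w,2δ)`, `C` a Cantor
construction inside `[0,1]` with `2·max(|I_{j0}|,|I_{j1}|) ≤ |I_j|`, and
`q·ν(I_j) ≤ h(I_j) ≤ r·ν(I_j)` for all `j`, then for every closed interval
`J ⊆ [0,1]`, `(q/(2D²))·ν(J) ≤ μ_h(J ∩ C) ≤ r·ν(J)`; in particular
`0 < μ_h(C) < ∞`, so `μ_h` is a mass distribution on `C`. -/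
theorem statement0 (h : ℝ → ℝ → ℝ) (hg : IsGauge h)
    (D : ℝ) (hD : 0 < D) (hDh : ∀ w δ : ℝ, 0 < δ → h w (2 * δ) < D * h w δ)
    (C : CantorConstruction) (hC01 : C.I [] ⊆ Set.Icc (0 : ℝ) 1)
    (hsplit : ∀ j : List Bool,
      2 * max (C.len (j ++ [false])) (C.len (j ++ [true])) ≤ C.len j)
    (ν : Measure ℝ) (hν : C.IsCantorMeasure ν)
    (q r : ℝ) (hq : 0 < q) (hr : 0 < r)
    (hqr : ∀ j : List Bool,
      q * (ν (C.I j)).toReal ≤ h (C.mid j) (C.len j) ∧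
      h (C.mid j) (C.len j) ≤ r * (ν (C.I j)).toReal) :
    (∀ u v : ℝ, 0 ≤ u → u ≤ v → v ≤ 1 →
      ENNReal.ofReal (q / (2 * D ^ 2)) * ν (Set.Icc u v)
          ≤ muH h (Set.Icc u v ∩ C.cantorSet) ∧
      muH h (Set.Icc u v ∩ C.cantorSet) ≤ ENNReal.ofReal r * ν (Set.Icc u v)) ∧
    0 < muH h C.cantorSet ∧ muH h C.cantorSet < ⊤ := by
  have := hν.1
  have main : ∀ u v : ℝ, ENNReal.ofReal (q / (2 * D ^ 2)) * ν (Set.Icc u v)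
          ≤ muH h (Set.Icc u v ∩ C.cantorSet) ∧
      muH h (Set.Icc u v ∩ C.cantorSet) ≤ ENNReal.ofReal r * ν (Set.Icc u v) := fun u v =>
    ⟨CantorConstruction.mul_measure_le_muH hν
      (CantorConstruction.mul_measure_Iv_le hg hD hDh hsplit hν hq fun j => (hqr j).1) _,
      CantorConstruction.muH_le hg hν hr (fun j => (hqr j).2) isClosed_Icc⟩
  have hCsub : C.cantorSet ⊆ Set.Icc 0 1 := by
    intro z hz
    simp only [CantorConstruction.cantorSet, mem_iInter, mem_iUnion, mem_ofPred_eq,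
      exists_prop] at hz
    obtain ⟨j, hj, hzj⟩ := hz 0
    rw [List.length_eq_zero_iff] at hj
    subst hj
    exact hC01 hzj
  have hone : ν (Set.Icc 0 1) = 1 := by
    refine le_antisymm prob_le_one ?_
    have h1 := measure_mono (μ := ν) hC01
    rw [hν.2] at h1
    simpa using h1
  obtain ⟨hlo, hup⟩ := main 0 1
  rw [inter_eq_self_of_subset_right hCsub, hone, mul_one] at hlo hup
  exact ⟨fun u v _ _ _ => main u v,
    (ENNReal.ofReal_pos.mpr (by positivity)).trans_le hlo,
    hup.trans_lt ENNReal.ofReal_lt_top⟩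
end

section
/- Let J ⊆ [0,1] be a closed interval and ε > 0. Let h be a gauge function of the form h(w,δ) = g(δ) with g concave, and let {I_j} be a Cantor construction whose Cantor set C has Lebesgue measure zero and whose gap sequence is decreasing, i.e. |G_l^k| ≤ |G_{l'}^{k'}| whenever 2^{k'} + l' < 2^k + l, with Cantor measure ν. Suppose there exist q, r > 0 and N ∈ ℕ such that q·ν(I_j) ≤ g(|I_j|) ≤ r·ν(I_j) for every binary word j with |j| ≥ N and I_j ⊆ (1+ε)·J. Then (2q − r)·ν(J) ≤ μ_h(J ∩ C) ≤ r·ν(J). -/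
/-!
Upper bound: cover `J ∩ C` by the basic intervals of a deep level that meet `J`. Their
`g`-lengths sum to at most `r` times the `ν`-measure of a small closed neighbourhood of `J`, and
these measures decrease to `ν(J)`.

Lower bound, for `2q > r`: it suffices that `g(|I|) ≥ (2q - r) ν(I ∩ J)` for every short interval
`I`, since this can be summed over a cover. A short `I` meets `C ∩ J` inside one deep basic
interval and can be replaced by an interval with basic intervals of one common level at both ends
(`cover_interval_bound`).

* As `C` is a null set, the length of a basic interval is the sum of the gaps inside it, so on a
  fixed level lengths decrease from left to right (`len_le_of_bval_le`).
* The interval is cut at the gap of the smallest basic interval containing it, into a final segment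
  of the left child and an initial segment of the right child. By midpoint concavity of `g`, an
  initial segment of a basic interval is controlled by the complementary final segment
  (`prefix_bound`), so final segments are the main case (`suffix_bound`).
* If `i` is one level deeper than `j`, the two-sided hypothesis gives
  `g(|I_j|) - g(|I_i|) ≥ (2q - r) 2^{-|j|-1}`. As `g` is concave, the increment from `|I_{j0}|` to
  `|I_j|` bounds the slope of `g` from below further to the left. Down the rightmost branch below
  `I_j`, `le_g_rgt` accumulates such increments between consecutive levels together with that slope
  times the spread of lengths within each level. A final segment carrying a given share of the mass
  of `I_{j0}` may be shorter than the same share of its length, because the intervals on the right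
  are the short ones; `suffix_length` bounds the deficit by the sum of these spreads.
-/

open MeasureTheory Set Filter
open scoped ENNReal

/-! ### Binary words and lengths of basic intervals -/
namespace CantorConstruction

variable (C : CantorConstruction)

lemma gapLen_pos (j : List Bool) : 0 < C.gapLen j := by
  have h3 := C.disj j
  unfold gapLen
  linarith

lemma len_split (j : List Bool) :
    C.len j = C.len (j ++ [false]) + C.gapLen j + C.len (j ++ [true]) := by
  unfold len gapLen
  rw [C.left0, C.right1]
  ring

lemma a_le_a_append (w j : List Bool) : C.a j ≤ C.a (j ++ w) := by
  induction w generalizing j with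
  | nil => simp
  | cons h w ih =>
    rw [List.append_cons]
    refine le_trans ?_ (ih (j ++ [h]))
    cases h
    · exact (C.left0 j).ge
    · exact C.sub1 j

lemma b_append_le_b (w j : List Bool) : C.b (j ++ w) ≤ C.b j := by
  induction w generalizing j with
  | nil => simp
  | cons h w ih =>
    rw [List.append_cons]
    refine le_trans (ih (j ++ [h])) ?_
    cases h
    · exact C.sub0 j
    · exact (C.right1 j).le

lemma len_append_le (w j : List Bool) : C.len (j ++ w) ≤ C.len j := by
  have h1 := C.a_le_a_append w j
  have h2 := C.b_append_le_b w j
  unfold len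
  linarith

lemma I_append_subset (w j : List Bool) : C.I (j ++ w) ⊆ C.I j :=
  Icc_subset_Icc (C.a_le_a_append w j) (C.b_append_le_b w j)

/-- The position of a binary word among the words of its length: the number whose binary
expansion, most significant digit first, it is. -/
def bval (j : List Bool) : ℕ := j.foldl (fun n b => 2 * n + b.toNat) 0

lemma bval_snoc (j : List Bool) (b : Bool) : bval (j ++ [b]) = 2 * bval j + b.toNat := by
  simp [bval]

lemma word_bval (j : List Bool) : word j.length (bval j) = j := by
  induction j using List.reverseRecOn with
  | nil => rfl
  | append_singleton j b ih =>
    rw [List.length_append, List.length_singleton, bval_snoc]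
    have h1 : (2 * bval j + b.toNat) / 2 = bval j := by cases b <;> simp <;> omega
    have h2 : decide ((2 * bval j + b.toNat) % 2 = 1) = b := by cases b <;> simp
    rw [word, h1, h2, ih]

lemma bval_lt (j : List Bool) : bval j < 2 ^ j.length := by
  induction j using List.reverseRecOn with
  | nil => simp [bval]
  | append_singleton j b ih =>
    rw [List.length_append, List.length_singleton, bval_snoc, pow_succ]
    have : b.toNat ≤ 1 := Bool.toNat_le b
    omega

lemma bval_append (w j : List Bool) : bval (j ++ w) = bval j * 2 ^ w.length + bval w := by
  induction w using List.reverseRecOn with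
  | nil => simp [bval]
  | append_singleton w b ih =>
    rw [← List.append_assoc, bval_snoc, ih, bval_snoc, List.length_append,
      List.length_singleton, pow_succ]
    ring

lemma bval_replicate_false (n : ℕ) : bval (List.replicate n false) = 0 := by
  induction n with
  | zero => rfl
  | succ n ih => rw [List.replicate_succ', bval_snoc, ih]; rfl

lemma bval_replicate_true (n : ℕ) : bval (List.replicate n true) + 1 = 2 ^ n := by
  induction n with
  | zero => rfl
  | succ n ih =>
    rw [List.replicate_succ', bval_snoc, pow_succ, ← ih]
    simp
    ring

/-- The gap sequence, enumerated level by level and from left to right, is decreasing. -/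
def GapsDecrease : Prop :=
  ∀ k l k' l' : ℕ, l < 2 ^ k → l' < 2 ^ k' → 2 ^ k' + l' < 2 ^ k + l →
    C.gapLen (word k l) ≤ C.gapLen (word k' l')

variable {C}

lemma GapsDecrease.of_length_lt (hdec : C.GapsDecrease) {i j : List Bool}
    (h : j.length < i.length) : C.gapLen i ≤ C.gapLen j := by
  have := hdec i.length (bval i) j.length (bval j) (bval_lt i) (bval_lt j) (by
    have h1 := bval_lt j
    have h2 : 2 ^ (j.length + 1) ≤ 2 ^ i.length := Nat.pow_le_pow_right (by norm_num) h
    rw [pow_succ] at h2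
    omega)
  rwa [word_bval, word_bval] at this

lemma GapsDecrease.of_bval_le (hdec : C.GapsDecrease) {i j : List Bool}
    (h : j.length = i.length) (hv : bval j ≤ bval i) : C.gapLen i ≤ C.gapLen j := by
  rcases hv.eq_or_lt with hv | hv
  · rw [← word_bval i, ← word_bval j, h, hv]
  · have := hdec i.length (bval i) j.length (bval j) (bval_lt i) (bval_lt j) (by rw [h]; omega)
    rwa [word_bval, word_bval] at this

variable (C)

/-- The total length of the `2 ^ n` basic intervals lying `n` levels below `I_j`. -/
def remLen : ℕ → List Bool → ℝ
  | 0, j => C.len j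
  | n + 1, j => remLen n (j ++ [false]) + remLen n (j ++ [true])

/-- The union of the `2 ^ n` basic intervals lying `n` levels below `I_j`. -/
def levelSet : ℕ → List Bool → Set ℝ
  | 0, j => C.I j
  | n + 1, j => levelSet n (j ++ [false]) ∪ levelSet n (j ++ [true])

lemma remLen_nonneg (n : ℕ) (j : List Bool) : 0 ≤ C.remLen n j := by
  induction n generalizing j with
  | zero => exact (C.len_pos j).le
  | succ n ih => exact add_nonneg (ih _) (ih _)

lemma remLen_append_le (w : List Bool) (n : ℕ) (j : List Bool) :
    C.remLen n (j ++ w) ≤ C.remLen (n + w.length) j := by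
  induction w generalizing j with
  | nil => simp
  | cons h w ih =>
    rw [List.append_cons, List.length_cons, ← add_assoc]
    refine (ih (j ++ [h])).trans ?_
    have h0 := C.remLen_nonneg (n + w.length) (j ++ [false])
    have h1 := C.remLen_nonneg (n + w.length) (j ++ [true])
    cases h <;> simp only [remLen] <;> linarith

lemma levelSet_subset (n : ℕ) (j : List Bool) : C.levelSet n j ⊆ C.I j := by
  induction n generalizing j with
  | zero => exact subset_rfl
  | succ n ih =>
    exact union_subset ((ih _).trans (C.I_append_subset _ _))
      ((ih _).trans (C.I_append_subset _ _))

lemma measurableSet_levelSet (n : ℕ) (j : List Bool) : MeasurableSet (C.levelSet n j) := by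
  induction n generalizing j with
  | zero => exact measurableSet_Icc
  | succ n ih => exact (ih _).union (ih _)

lemma volume_levelSet (n : ℕ) (j : List Bool) :
    volume (C.levelSet n j) = ENNReal.ofReal (C.remLen n j) := by
  induction n generalizing j with
  | zero => simp [levelSet, remLen, I, len]
  | succ n ih =>
    have hd : Disjoint (C.levelSet n (j ++ [false])) (C.levelSet n (j ++ [true])) := by
      refine Disjoint.mono (C.levelSet_subset n _) (C.levelSet_subset n _) ?_
      rw [Set.disjoint_left]
      intro x hx hx'
      exact absurd (hx.2.trans_lt (C.disj j)) (not_lt.2 hx'.1)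
    simp only [levelSet, remLen]
    rw [measure_union hd (C.measurableSet_levelSet n _), ih, ih,
      ENNReal.ofReal_add (C.remLen_nonneg _ _) (C.remLen_nonneg _ _)]

lemma levelSet_succ_subset (n : ℕ) (j : List Bool) : C.levelSet (n + 1) j ⊆ C.levelSet n j := by
  induction n generalizing j with
  | zero => exact union_subset (C.I_append_subset _ _) (C.I_append_subset _ _)
  | succ n ih => exact union_subset_union (ih _) (ih _)

lemma exists_of_mem_levelSet {n : ℕ} {j : List Bool} {x : ℝ} (hx : x ∈ C.levelSet n j) :
    ∃ w : List Bool, w.length = n ∧ x ∈ C.I (j ++ w) := by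
  induction n generalizing j with
  | zero => exact ⟨[], rfl, by simpa [levelSet] using hx⟩
  | succ n ih =>
    rcases hx with hx | hx
    · obtain ⟨w, hw, hxw⟩ := ih hx
      exact ⟨false :: w, by simp [hw], by rwa [List.append_cons]⟩
    · obtain ⟨w, hw, hxw⟩ := ih hx
      exact ⟨true :: w, by simp [hw], by rwa [List.append_cons]⟩

lemma tendsto_remLen_nil (hzero : volume C.cantorSet = 0) :
    Tendsto (fun n => C.remLen n []) atTop (nhds 0) := by
  have h1 : Tendsto (fun n => volume (C.levelSet n [])) atTop
      (nhds (volume (⋂ n, C.levelSet n []))) := by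
    refine tendsto_measure_iInter_atTop
      (fun n => (C.measurableSet_levelSet n _).nullMeasurableSet)
      (antitone_nat_of_succ_le fun n => C.levelSet_succ_subset n _) ⟨0, ?_⟩
    rw [volume_levelSet]
    exact ENNReal.ofReal_ne_top
  have h2 : volume (⋂ n, C.levelSet n []) = 0 := by
    refine measure_mono_null ?_ hzero
    refine iInter_mono fun n x hx => ?_
    obtain ⟨w, hw, hxw⟩ := C.exists_of_mem_levelSet hx
    exact mem_iUnion₂.2 ⟨w, hw, hxw⟩
  rw [h2] at h1
  have h3 := (ENNReal.tendsto_toReal ENNReal.zero_ne_top).comp h1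
  refine h3.congr fun n => ?_
  simp [volume_levelSet, ENNReal.toReal_ofReal (C.remLen_nonneg n [])]

variable {C}

lemma len_add_remLen_le (hdec : C.GapsDecrease) (n : ℕ) {i j : List Bool}
    (h : j.length = i.length) (hv : bval j ≤ bval i) :
    C.len i + C.remLen n j ≤ C.len j + C.remLen n i := by
  induction n generalizing i j with
  | zero => simp only [remLen]; linarith
  | succ n ih =>
    have h0 := ih (i := i ++ [false]) (j := j ++ [false]) (by simp [h])
      (by rw [bval_snoc, bval_snoc]; omega)
    have h1 := ih (i := i ++ [true]) (j := j ++ [true]) (by simp [h])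
      (by rw [bval_snoc, bval_snoc]; omega)
    have h2 := hdec.of_bval_le h hv
    rw [C.len_split i, C.len_split j]
    simp only [remLen]
    linarith

/-- Since `C` is Lebesgue-null, a basic interval is as long as the gaps inside it together, so
decreasing gaps make the basic intervals of one level shrink from left to right. -/
lemma len_le_of_bval_le (hdec : C.GapsDecrease) (hzero : volume C.cantorSet = 0)
    {i j : List Bool} (h : j.length = i.length) (hv : bval j ≤ bval i) :
    C.len i ≤ C.len j := by
  have ht := ((tendsto_add_atTop_iff_nat i.length).2 (C.tendsto_remLen_nil hzero)).const_add
    (C.len j)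
  rw [add_zero] at ht
  refine ge_of_tendsto' ht fun n => ?_
  have h1 := len_add_remLen_le hdec n h hv
  have h2 := C.remLen_nonneg n j
  have h3 := C.remLen_append_le i n []
  rw [List.nil_append] at h3
  linarith

/-- The share of `ν (I_j)` carried by the part of `I_j` from the left endpoint of `I_{jw}`
onwards; it does not depend on `j`. -/
noncomputable def suf : List Bool → ℝ
  | [] => 1
  | false :: w => 1 / 2 + suf w / 2
  | true :: w => suf w / 2

/-- The share of `ν (I_j)` carried by the part of `I_j` up to the right endpoint of `I_{jw}`;
it does not depend on `j`. -/
noncomputable def pre : List Bool → ℝ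
  | [] => 1
  | false :: w => pre w / 2
  | true :: w => 1 / 2 + pre w / 2

lemma suf_mem (w : List Bool) : 0 ≤ suf w ∧ suf w ≤ 1 := by
  induction w with
  | nil => simp [suf]
  | cons h w ih => cases h <;> simp only [suf] <;> constructor <;> linarith [ih.1, ih.2]

/-- A final segment of `I_i` carrying the share `suf w` of its mass occupies, up to an error, at
least the same share of its length, once a gap `G` at least as long as all gaps inside `I_i` has
been added to both. The error allows, on each level below `i`, for the difference `Δ` in length
between sibling intervals. -/
lemma suffix_length (hdec : C.GapsDecrease) (j : List Bool) (Δ : ℕ → ℝ)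
    (hΔ : ∀ p : List Bool,
      C.len (j ++ p ++ [false]) - C.len (j ++ p ++ [true]) ≤ Δ (p.length + 1))
    (hΔ0 : ∀ n, 0 ≤ Δ n) (w p : List Bool) (G : ℝ)
    (hG : ∀ i : List Bool, (j ++ p).length ≤ i.length → C.gapLen i ≤ G) :
    suf w * (C.len (j ++ p) + G) ≤
      C.b (j ++ p) - C.a (j ++ p ++ w) + G + ∑ t ∈ Finset.range w.length, Δ (p.length + 1 + t) := by
  induction w generalizing p G with
  | nil => simp [suf, len]
  | cons h w ih =>
    have hs := suf_mem w
    have hd := hΔ p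
    have hd0 := hΔ0 (p.length + 1)
    have hsplit := C.len_split (j ++ p)
    have hgG := hG (j ++ p) le_rfl
    rw [List.length_cons, Finset.sum_range_succ', List.append_cons (j ++ p)]
    have hsum : ∀ h : Bool, ∑ t ∈ Finset.range w.length, Δ (p.length + 1 + (t + 1)) =
        ∑ t ∈ Finset.range w.length, Δ ((p ++ [h]).length + 1 + t) := fun h =>
      Finset.sum_congr rfl fun t _ => by
        congr 1
        simp only [List.length_append, List.length_singleton]
        ring
    cases h with
    | true =>
      have h1 := ih (p ++ [true]) G (fun i hi => hG i (by simp at hi ⊢; omega))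
      rw [hsum true]
      simp only [← List.append_assoc, C.right1] at h1
      simp only [suf, add_zero]
      nlinarith [mul_nonneg hs.1 (sub_nonneg.2 hd), mul_nonneg hs.1 (sub_nonneg.2 hgG),
        mul_nonneg (sub_nonneg.2 hs.2) hd0]
    | false =>
      have h1 := ih (p ++ [false]) (C.gapLen (j ++ p))
        (fun i hi => hdec.of_length_lt (by simp at hi ⊢; omega))
      rw [hsum false]
      simp only [← List.append_assoc] at h1
      have hb : C.b (j ++ p) =
          C.b (j ++ p ++ [false]) + C.gapLen (j ++ p) + C.len (j ++ p ++ [true]) := by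
        unfold gapLen len
        rw [C.right1]
        ring
      simp only [suf, add_zero]
      nlinarith [mul_nonneg (sub_nonneg.2 hs.2) (sub_nonneg.2 hd),
        mul_nonneg (sub_nonneg.2 hs.2) (sub_nonneg.2 hgG), mul_nonneg hs.1 hd0]

end CantorConstruction

/-! ### Concave gauges on short intervals -/

/-- Chord slopes of a concave function decrease from left to right, also when the two chords
overlap. -/
lemma ConcaveOn.chord_mul_le {g : ℝ → ℝ} (hconc : ConcaveOn ℝ (Set.Ioi 0) g) {s t p P : ℝ}
    (hs : 0 < s) (hst : s ≤ t) (hsp : s ≤ p) (htP : t ≤ P) (hpP : p < P) :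
    (t - s) * (g P - g p) ≤ (P - p) * (g t - g s) := by
  have hsP : 0 < P - s := by linarith
  have key : ∀ z : ℝ, s ≤ z → z ≤ P → (P - z) * g s + (z - s) * g P ≤ (P - s) * g z := by
    intro z hz hzP
    have h := hconc.2 (Set.mem_Ioi.2 hs) (Set.mem_Ioi.2 (show 0 < P by linarith))
      (div_nonneg (sub_nonneg.2 hzP) hsP.le) (div_nonneg (sub_nonneg.2 hz) hsP.le)
      (by rw [← add_div, div_eq_one_iff_eq hsP.ne']; ring)
    have hz' : ((P - z) / (P - s)) • s + ((z - s) / (P - s)) • P = z := by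
      simp only [smul_eq_mul]
      field_simp
      ring
    rw [hz'] at h
    simp only [smul_eq_mul] at h
    calc (P - z) * g s + (z - s) * g P
        = (P - s) * ((P - z) / (P - s) * g s + (z - s) / (P - s) * g P) := by field_simp
      _ ≤ (P - s) * g z := mul_le_mul_of_nonneg_left h hsP.le
  have h1 := key t hst htP
  have h2 := key p hsp hpP.le
  have h3 := mul_le_mul_of_nonneg_left h2 (sub_nonneg.2 hst)
  have h4 := mul_le_mul_of_nonneg_left h1 (sub_nonneg.2 hpP.le)
  refine le_of_mul_le_mul_left ?_ hsP
  nlinarith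

namespace CantorConstruction

variable {C : CantorConstruction}

/-- All basic intervals `I_i` inside `I_j` satisfy `q 2^{-|i|} ≤ g (|I_i|) ≤ r 2^{-|i|}`. -/
def Good (C : CantorConstruction) (g : ℝ → ℝ) (q r : ℝ) (j : List Bool) : Prop :=
  ∀ p : List Bool, q * (1 / 2) ^ (j ++ p).length ≤ g (C.len (j ++ p)) ∧
    g (C.len (j ++ p)) ≤ r * (1 / 2) ^ (j ++ p).length

lemma Good.append {g : ℝ → ℝ} {q r : ℝ} {j : List Bool} (h : C.Good g q r j) (w : List Bool) :
    C.Good g q r (j ++ w) := fun p => by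
  rw [List.append_assoc]; exact h (w ++ p)

lemma Good.self {g : ℝ → ℝ} {q r : ℝ} {j : List Bool} (h : C.Good g q r j) :
    q * (1 / 2) ^ j.length ≤ g (C.len j) ∧ g (C.len j) ≤ r * (1 / 2) ^ j.length := by
  simpa using h []

lemma Good.q_le_r {g : ℝ → ℝ} {q r : ℝ} {j : List Bool} (h : C.Good g q r j) : q ≤ r := by
  have h1 := h.self.1.trans h.self.2
  exact le_of_mul_le_mul_right h1 (by positivity)

section

variable {g : ℝ → ℝ} (hmono : ∀ s t, 0 < s → s ≤ t → g s ≤ g t)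
  (hconc : ConcaveOn ℝ (Set.Ioi 0) g) {q r : ℝ} (hdec : C.GapsDecrease)
  (hlen : ∀ i j : List Bool, j.length = i.length → bval j ≤ bval i → C.len i ≤ C.len j)

/-- The leftmost basic interval `n` levels below `I_j`. -/
abbrev lft (j : List Bool) (n : ℕ) : List Bool := j ++ List.replicate n false

/-- The rightmost basic interval `n` levels below `I_j`. -/
abbrev rgt (j : List Bool) (n : ℕ) : List Bool := j ++ List.replicate n true

/-- The difference in length between the leftmost and the rightmost basic interval `n` levels
below `I_j`. -/
def spread (C : CantorConstruction) (j : List Bool) (n : ℕ) : ℝ :=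
  C.len (lft j n) - C.len (rgt j n)

include hlen in
lemma spread_nonneg (j : List Bool) (n : ℕ) : 0 ≤ C.spread j n := by
  refine sub_nonneg.2 (hlen _ _ (by simp) ?_)
  rw [bval_append, bval_append, bval_replicate_false]
  simp

include hlen in
lemma len_sub_len_le_spread (j p : List Bool) :
    C.len (j ++ p ++ [false]) - C.len (j ++ p ++ [true]) ≤ C.spread j (p.length + 1) := by
  have h1 : C.len (j ++ p ++ [false]) ≤ C.len (lft j (p.length + 1)) := by
    refine hlen _ _ (by simp) ?_
    rw [List.append_assoc, bval_append, bval_append, bval_replicate_false]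
    simp
  have h2 : C.len (rgt j (p.length + 1)) ≤ C.len (j ++ p ++ [true]) := by
    refine hlen _ _ (by simp) ?_
    rw [List.append_assoc, bval_append (p ++ [true]), bval_append (List.replicate _ _)]
    have h3 := bval_replicate_true (p.length + 1)
    have h4 := bval_lt (p ++ [true])
    simp only [List.length_append, List.length_singleton, List.length_replicate] at h4 ⊢
    omega
  unfold spread
  linarith

include hlen in
/-- Going down the rightmost branch, `g` gains `(2q - r) 2^{-|i|-1}` between the longest interval
of one level and the shortest interval of the level above. Between the shortest and the longest
interval of the same level it grows with slope at least `τ`. -/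
lemma le_g_rgt {j : List Bool} (hj : C.Good g q r j) {τ : ℝ}
    (hτ : ∀ s t, 0 < s → s ≤ t → s ≤ C.len (j ++ [false]) → t ≤ C.len j →
      τ * (t - s) ≤ g t - g s) (n i : ℕ) (hi : 1 ≤ i) :
    (2 * q - r) * (1 / 2) ^ (j.length + i) + τ * ∑ t ∈ Finset.range n, C.spread j (i + 1 + t) ≤
      g (C.len (rgt j i)) := by
  induction n generalizing i with
  | zero =>
    have h1 := (hj (List.replicate i true)).1
    have h2 := hj.q_le_r
    simp only [List.length_append, List.length_replicate] at h1
    simp only [Finset.range_zero, Finset.sum_empty, mul_zero, add_zero]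
    refine le_trans ?_ h1
    exact mul_le_mul_of_nonneg_right (by linarith) (by positivity)
  | succ n ih =>
    have h1 := ih (i + 1) (by omega)
    have h2 := (hj (List.replicate i true)).1
    have h3 := (hj (List.replicate (i + 1) false)).2
    have hle : C.len (lft j (i + 1)) ≤ C.len (j ++ [false]) := by
      rw [lft, List.replicate_succ, List.append_cons]
      exact C.len_append_le _ _
    have h4 := hτ (C.len (rgt j (i + 1))) (C.len (lft j (i + 1))) (C.len_pos _)
      (sub_nonneg.1 (spread_nonneg hlen j (i + 1)))
      ((sub_nonneg.1 (spread_nonneg hlen j (i + 1))).trans hle) (C.len_append_le _ _)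
    simp only [List.length_append, List.length_replicate] at h2 h3
    rw [Finset.sum_range_succ']
    have hsum : ∑ t ∈ Finset.range n, C.spread j (i + 1 + (t + 1)) =
        ∑ t ∈ Finset.range n, C.spread j (i + 1 + 1 + t) :=
      Finset.sum_congr rfl fun t _ => by congr 1; ring
    rw [hsum, mul_add]
    rw [← add_assoc, pow_succ] at h1 h3
    unfold spread at h1 ⊢
    simp only [add_zero]
    nlinarith

include hconc hdec hlen in
/-- The bound `g (|I|) ≥ (2q - r) ν (I)` when `I` is a final segment of a basic interval `I_j`. If
`I` reaches into `I_{j0}`, then `g` is bounded below at the length of `I_{j1}` by `le_g_rgt`, and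
from there to `|I|` it grows at least as fast as between `|I_{j0}|` and `|I_j|`. -/
lemma suffix_bound (hqr : r ≤ 2 * q) (w j : List Bool) (hj : C.Good g q r j) :
    (2 * q - r) * (1 / 2) ^ j.length * suf w ≤ g (C.b j - C.a (j ++ w)) := by
  induction w generalizing j with
  | nil =>
    have h1 := hj.self.1
    have h2 := hj.q_le_r
    simp only [suf, mul_one, List.append_nil]
    exact (mul_le_mul_of_nonneg_right (by linarith) (by positivity)).trans h1
  | cons h w ih =>
    cases h with
    | true =>
      have h1 := ih (j ++ [true]) (hj.append _)
      rw [C.right1, ← List.append_cons] at h1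
      refine le_trans (le_of_eq ?_) h1
      simp only [suf, List.length_append, List.length_singleton, pow_succ]
      ring
    | false =>
      have hsplit := C.len_split j
      have hp0 := C.len_pos (j ++ [false])
      have hp1 := C.len_pos (j ++ [true])
      have hg0 := C.gapLen_pos j
      have hl01 : C.len (j ++ [true]) ≤ C.len (j ++ [false]) :=
        hlen _ _ (by simp) (by rw [bval_snoc, bval_snoc]; simp)
      set D := C.len j - C.len (j ++ [false]) with hD
      have hDpos : 0 < D := by linarith
      set τ := (2 * q - r) * (1 / 2) ^ (j.length + 1) / D with hτdef
      have hτ0 : 0 ≤ τ := div_nonneg (mul_nonneg (by linarith) (by positivity)) hDpos.le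
      have hτD : τ * D = (2 * q - r) * (1 / 2) ^ (j.length + 1) := by
        rw [hτdef]; field_simp
      have hτ : ∀ s t, 0 < s → s ≤ t → s ≤ C.len (j ++ [false]) → t ≤ C.len j →
          τ * (t - s) ≤ g t - g s := by
        intro s t hs hst hs' ht
        have h1 := hconc.chord_mul_le hs hst hs' ht (by linarith : C.len (j ++ [false]) < C.len j)
        rw [← hD] at h1
        have h2 := hj.self.1
        have h3 := (hj [false]).2
        simp only [List.length_append, List.length_singleton] at h3
        have h4 : τ * D ≤ g (C.len j) - g (C.len (j ++ [false])) := by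
          rw [hτD]
          rw [pow_succ] at h3 ⊢
          linarith
        refine le_of_mul_le_mul_left ?_ hDpos
        have h5 := mul_le_mul_of_nonneg_left h4 (sub_nonneg.2 hst)
        linarith
      have h1 := le_g_rgt hlen hj hτ w.length 1 le_rfl
      have h2 := suffix_length hdec j (C.spread j) (len_sub_len_le_spread hlen j)
        (spread_nonneg hlen j) w [false] (C.gapLen j)
        (fun i hi => hdec.of_length_lt (by simp at hi; omega))
      have hs := suf_mem w
      have hba : C.a (j ++ [false] ++ w) ≤ C.b (j ++ [false]) :=
        (C.le _).trans (C.b_append_le_b w _)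
      have haa := C.a_le_a_append (false :: w) j
      rw [← List.append_cons] at h2 hba
      have hI : C.b j - C.a (j ++ false :: w) = C.len (j ++ [true]) + C.gapLen j +
          (C.b (j ++ [false]) - C.a (j ++ false :: w)) := by
        unfold len gapLen
        rw [C.right1]
        ring
      have h3 := hτ (C.len (j ++ [true])) (C.b j - C.a (j ++ false :: w)) hp1 (by linarith) hl01
        (by unfold len; linarith)
      have h4 : suf w * D ≤ suf w * (C.len (j ++ [false]) + C.gapLen j) :=
        mul_le_mul_of_nonneg_left (by linarith) hs.1
      have h5 := mul_le_mul_of_nonneg_left (h4.trans h2) hτ0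
      have h6 : τ * (suf w * D) = suf w * (τ * D) := by ring
      rw [h6, hτD] at h5
      have hr1 : rgt j 1 = j ++ [true] := rfl
      rw [hr1] at h1
      simp only [List.length_singleton] at h5
      simp only [suf]
      rw [pow_succ] at h5 h1
      nlinarith

include hmono hconc hdec hlen in
/-- Extending an interval whose right end is at `y₀` into a basic interval `I_j` that lies behind
a gap at least as long as all gaps inside `I_j`: a lower bound for `g` of the length that holds
before `I_j` is entered and after all of `I_j` is covered also holds, interpolated by mass, in
between. Halfway through by mass is at least halfway through by length, so concavity applies. -/
lemma prefix_bound (w j : List Bool) (x y₀ K W : ℝ) (hx : x < y₀)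
    (hgap : ∀ i : List Bool, j.length ≤ i.length → C.gapLen i ≤ C.a j - y₀)
    (h0 : K ≤ g (y₀ - x)) (h1 : K + W ≤ g (C.b j - x)) :
    K + W * pre w ≤ g (C.b (j ++ w) - x) := by
  induction w generalizing j y₀ K W with
  | nil => simpa [pre] using h1
  | cons h w ih =>
    have hgj := hgap j le_rfl
    have hgp := C.gapLen_pos j
    have hsplit := C.len_split j
    have hl01 : C.len (j ++ [true]) ≤ C.len (j ++ [false]) :=
      hlen _ _ (by simp) (by rw [bval_snoc, bval_snoc]; simp)
    have hl1 := C.len_pos (j ++ [true])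
    have hl0 := C.len_pos (j ++ [false])
    have hmid : K + W / 2 ≤ g (C.b (j ++ [false]) - x) := by
      have hpos : 0 < y₀ - x := by linarith
      have e0 : C.b (j ++ [false]) = C.a j + C.len (j ++ [false]) := by
        unfold len; rw [C.left0]; ring
      have e1 : C.b j = C.a j + C.len j := by unfold len; ring
      have hc := hconc.2 (Set.mem_Ioi.2 hpos)
        (Set.mem_Ioi.2 (show 0 < C.b j - x by linarith))
        (show (0 : ℝ) ≤ 1 / 2 by norm_num) (show (0 : ℝ) ≤ 1 / 2 by norm_num) (by norm_num)
      simp only [smul_eq_mul] at hc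
      have hm := hmono (1 / 2 * (y₀ - x) + 1 / 2 * (C.b j - x)) (C.b (j ++ [false]) - x)
        (by linarith) (by linarith)
      linarith
    rw [List.append_cons]
    cases h with
    | false =>
      have := ih (j ++ [false]) y₀ K (W / 2) hx
        (fun i hi => by rw [C.left0]; exact hgap i (by simp at hi; omega)) h0 hmid
      simp only [pre]
      linarith
    | true =>
      have hb : x < C.b (j ++ [false]) := by
        have : C.b (j ++ [false]) = C.a j + C.len (j ++ [false]) := by
          unfold len; rw [C.left0]; ring
        linarith
      have := ih (j ++ [true]) (C.b (j ++ [false])) (K + W / 2) (W / 2) hb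
        (fun i hi => hdec.of_length_lt (by simp at hi; omega)) hmid
        (by rw [C.right1]; linarith)
      simp only [pre]
      linarith

end

/-! ### The Cantor measure -/

section

variable {ν : Measure ℝ} (hν : C.IsCantorMeasure ν)

include hν in
lemma IsCantorMeasure.real_I (j : List Bool) : ν.real (C.I j) = (1 / 2) ^ j.length := by
  rw [Measure.real, hν.2]
  simp

include hν in
lemma IsCantorMeasure.gap_eq_zero (j : List Bool) : ν.real (C.gap j) = 0 := by
  have := hν.1
  have hd0 : Disjoint (C.I (j ++ [false])) (C.gap j) := by
    rw [Set.disjoint_left]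
    intro x hx hx'
    exact absurd hx.2 (not_le.2 hx'.1)
  have hd1 : Disjoint (C.I (j ++ [false]) ∪ C.gap j) (C.I (j ++ [true])) := by
    rw [Set.disjoint_left]
    rintro x (hx | hx) hx'
    · exact absurd (hx.2.trans_lt (C.disj j)) (not_lt.2 hx'.1)
    · exact absurd hx.2 (not_lt.2 hx'.1)
  have hsub : C.I (j ++ [false]) ∪ C.gap j ∪ C.I (j ++ [true]) ⊆ C.I j := by
    refine union_subset (union_subset (C.I_append_subset _ _) ?_) (C.I_append_subset _ _)
    intro x hx
    have h1 := C.I_append_subset [false] j ⟨C.le _, le_rfl⟩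
    have h2 := C.I_append_subset [true] j ⟨le_rfl, C.le _⟩
    exact ⟨h1.1.trans hx.1.le, hx.2.le.trans h2.2⟩
  have h := measureReal_mono (μ := ν) hsub
  rw [measureReal_union hd1 measurableSet_Icc, measureReal_union hd0 measurableSet_Ioo,
    hν.real_I, hν.real_I, hν.real_I] at h
  simp only [List.length_append, List.length_singleton, pow_succ] at h
  have h0 : 0 ≤ ν.real (C.gap j) := measureReal_nonneg
  linarith

include hν in
lemma IsCantorMeasure.real_Icc_le (j : List Bool) (x y : ℝ) :
    ν.real (Icc x y) ≤
      ν.real (Icc x (C.b (j ++ [false]))) + ν.real (Icc (C.a (j ++ [true])) y) := by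
  have := hν.1
  have hsub : Icc x y ⊆ Icc x (C.b (j ++ [false])) ∪ C.gap j ∪ Icc (C.a (j ++ [true])) y := by
    intro z hz
    by_cases h1 : z ≤ C.b (j ++ [false])
    · exact Or.inl (Or.inl ⟨hz.1, h1⟩)
    · by_cases h2 : z < C.a (j ++ [true])
      · exact Or.inl (Or.inr ⟨not_le.1 h1, h2⟩)
      · exact Or.inr ⟨not_lt.1 h2, hz.2⟩
  have h := measureReal_mono (μ := ν) hsub
  have h2 := measureReal_union_le (μ := ν) (Icc x (C.b (j ++ [false])) ∪ C.gap j)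
    (Icc (C.a (j ++ [true])) y)
  have h3 := measureReal_union_le (μ := ν) (Icc x (C.b (j ++ [false]))) (C.gap j)
  rw [hν.gap_eq_zero] at h3
  linarith

include hν in
lemma IsCantorMeasure.real_suf (w j : List Bool) :
    ν.real (Icc (C.a (j ++ w)) (C.b j)) ≤ (1 / 2) ^ j.length * suf w := by
  induction w generalizing j with
  | nil => simpa [suf, I] using (hν.real_I j).le
  | cons h w ih =>
    have h1 := ih (j ++ [h])
    rw [← List.append_cons, List.length_append, List.length_singleton, pow_succ] at h1
    cases h with
    | true =>
      rw [C.right1] at h1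
      simp only [suf]
      linarith
    | false =>
      have h2 := hν.real_Icc_le j (C.a (j ++ false :: w)) (C.b j)
      have h3 := hν.real_I (j ++ [true])
      rw [I, C.right1, List.length_append, List.length_singleton, pow_succ] at h3
      simp only [suf]
      linarith

include hν in
lemma IsCantorMeasure.real_pre (w j : List Bool) :
    ν.real (Icc (C.a j) (C.b (j ++ w))) ≤ (1 / 2) ^ j.length * pre w := by
  induction w generalizing j with
  | nil => simpa [pre, I] using (hν.real_I j).le
  | cons h w ih =>
    have h1 := ih (j ++ [h])
    rw [← List.append_cons, List.length_append, List.length_singleton, pow_succ] at h1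
    cases h with
    | false =>
      rw [C.left0] at h1
      simp only [pre]
      linarith
    | true =>
      have h2 := hν.real_Icc_le j (C.a j) (C.b (j ++ true :: w))
      have h3 := hν.real_I (j ++ [false])
      rw [I, C.left0, List.length_append, List.length_singleton, pow_succ] at h3
      simp only [pre]
      linarith

variable {g : ℝ → ℝ} (hmono : ∀ s t, 0 < s → s ≤ t → g s ≤ g t)
  (hconc : ConcaveOn ℝ (Set.Ioi 0) g) {q r : ℝ} (hdec : C.GapsDecrease)
  (hlen : ∀ i j : List Bool, j.length = i.length → bval j ≤ bval i → C.len i ≤ C.len j)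

include hν hmono hconc hdec hlen in
/-- The bound `g (|I|) ≥ (2q - r) ν (I)` for every interval `I` that starts and ends with a basic
interval of a common level, all inside one basic interval. -/
lemma interval_bound (hqr : r ≤ 2 * q) (w w' j : List Bool) (hw : w.length = w'.length)
    (hj : C.Good g q r j) (hab : C.a (j ++ w) ≤ C.b (j ++ w')) :
    0 < C.b (j ++ w') - C.a (j ++ w) ∧
      (2 * q - r) * ν.real (Icc (C.a (j ++ w)) (C.b (j ++ w'))) ≤
        g (C.b (j ++ w') - C.a (j ++ w)) := by
  induction w generalizing w' j with
  | nil =>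
    obtain rfl : w' = [] := List.length_eq_zero_iff.1 hw.symm
    simp only [List.append_nil]
    refine ⟨C.len_pos j, ?_⟩
    have h1 := hν.real_I j
    have h2 := suffix_bound hconc hdec hlen hqr [] j hj
    simp only [suf, mul_one, List.append_nil] at h2
    rw [I] at h1
    rw [h1]
    exact h2
  | cons h w ih =>
    cases w' with
    | nil => simp at hw
    | cons h' w' =>
      have hw2 : w.length = w'.length := by simpa using hw
      by_cases hh : h = h'
      · subst hh
        rw [List.append_cons j h w, List.append_cons j h w'] at hab ⊢
        exact ih w' (j ++ [h]) hw2 (hj.append _) hab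
      · have ha := (C.le (j ++ [h] ++ w)).trans (C.b_append_le_b w (j ++ [h]))
        have ha' := C.a_le_a_append w (j ++ [h])
        have hb := (C.a_le_a_append w' (j ++ [h'])).trans (C.le (j ++ [h'] ++ w'))
        have hb' := C.b_append_le_b w' (j ++ [h'])
        have hd := C.disj j
        rw [← List.append_cons] at ha hb ha' hb'
        have key : h = false ∧ h' = true := by
          cases h <;> cases h' <;> simp at hh ⊢
          linarith
        obtain ⟨rfl, rfl⟩ := key
        refine ⟨by linarith, ?_⟩
        have hA := suffix_bound hconc hdec hlen hqr w (j ++ [false]) (hj.append _)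
        have hB := suffix_bound hconc hdec hlen hqr (false :: w) j hj
        rw [← List.append_cons] at hA
        have hx : C.a (j ++ false :: w) < C.b (j ++ [false]) := by
          have h1 := C.len_pos (j ++ [false] ++ w)
          have h2 := C.b_append_le_b w (j ++ [false])
          rw [← List.append_cons] at h1 h2
          unfold len at h1
          linarith
        have hP := prefix_bound hmono hconc hdec hlen w' (j ++ [true]) (C.a (j ++ false :: w))
          (C.b (j ++ [false])) _ ((2 * q - r) * (1 / 2) ^ (j.length + 1)) hx
          (fun i hi => hdec.of_length_lt (by simp at hi; omega)) hA (by
            rw [C.right1]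
            refine le_trans (le_of_eq ?_) hB
            simp only [suf, List.length_append, List.length_singleton, pow_succ]
            ring)
        rw [← List.append_cons] at hP
        refine le_trans ?_ hP
        have h1 := hν.real_Icc_le j (C.a (j ++ false :: w)) (C.b (j ++ true :: w'))
        have h2 := hν.real_suf w (j ++ [false])
        have h3 := hν.real_pre w' (j ++ [true])
        rw [← List.append_cons] at h2 h3
        simp only [List.length_append, List.length_singleton] at h2 h3 ⊢
        have h4 := mul_le_mul_of_nonneg_left (h1.trans (add_le_add h2 h3))
          (sub_nonneg.2 hqr)
        linarith

end

end CantorConstruction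

/-! ### Points of `C` and covers -/

namespace CantorConstruction

variable {C : CantorConstruction}

/-- The points of `I_∅` that lie in no gap. They are the points of the Cantor set; only the
inclusion `core_subset_cantorSet` is needed. -/
def core (C : CantorConstruction) : Set ℝ := C.I [] \ ⋃ j, C.gap j

lemma mem_child_of_mem_core {x : ℝ} (hx : x ∈ C.core) {j : List Bool} (hj : x ∈ C.I j) :
    ∃ h : Bool, x ∈ C.I (j ++ [h]) := by
  have h1 : x ∉ C.gap j := fun h => hx.2 (mem_iUnion.2 ⟨j, h⟩)
  by_cases h2 : x ≤ C.b (j ++ [false])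
  · exact ⟨false, by rw [C.left0]; exact hj.1, h2⟩
  · exact ⟨true, not_lt.1 fun h3 => h1 ⟨not_le.1 h2, h3⟩, by rw [C.right1]; exact hj.2⟩

lemma exists_word_of_mem_core {x : ℝ} (hx : x ∈ C.core) {j : List Bool} (hj : x ∈ C.I j) (n : ℕ) :
    ∃ w : List Bool, w.length = n ∧ x ∈ C.I (j ++ w) := by
  induction n with
  | zero => exact ⟨[], rfl, by simpa using hj⟩
  | succ n ih =>
    obtain ⟨w, hw, hxw⟩ := ih
    obtain ⟨h, hh⟩ := mem_child_of_mem_core hx hxw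
    exact ⟨w ++ [h], by simp [hw], by rwa [← List.append_assoc]⟩

lemma core_subset_cantorSet : C.core ⊆ C.cantorSet := by
  intro x hx
  refine mem_iInter.2 fun n => ?_
  obtain ⟨w, hw, hxw⟩ := exists_word_of_mem_core hx hx.1 n
  exact mem_iUnion₂.2 ⟨w, hw, hxw⟩

lemma isCompact_core : IsCompact C.core :=
  isCompact_Icc.diff (isOpen_iUnion fun _ => isOpen_Ioo)

lemma IsCantorMeasure.ae_mem_core {ν : Measure ℝ} (hν : C.IsCantorMeasure ν) : ν C.coreᶜ = 0 := by
  have := hν.1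
  have h1 : C.coreᶜ ⊆ (C.I [])ᶜ ∪ ⋃ j, C.gap j := by
    intro x hx
    by_contra h
    rw [mem_union, not_or, mem_compl_iff, not_not] at h
    exact hx h
  refine measure_mono_null h1 (measure_union_null ?_ (measure_iUnion_null fun j => ?_))
  · rw [prob_compl_eq_zero_iff (s := C.I []) measurableSet_Icc, hν.2]
    simp
  · exact (measureReal_eq_zero_iff).1 (hν.gap_eq_zero j)

lemma disjoint_I {i j : List Bool} (h : i.length = j.length) (hij : i ≠ j) :
    Disjoint (C.I i) (C.I j) := by
  induction i using List.reverseRecOn generalizing j with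
  | nil => exact absurd (List.length_eq_zero_iff.1 h.symm).symm hij
  | append_singleton i b ih =>
    induction j using List.reverseRecOn with
    | nil => simp at h
    | append_singleton j b' _ =>
      by_cases hij' : i = j
      · subst hij'
        have hd : Disjoint (C.I (i ++ [false])) (C.I (i ++ [true])) := by
          rw [Set.disjoint_left]
          intro x hx hx'
          exact absurd (hx.2.trans_lt (C.disj i)) (not_lt.2 hx'.1)
        cases b <;> cases b'
        · exact absurd rfl hij
        · exact hd
        · exact hd.symm
        · exact absurd rfl hij
      · exact (ih (by simpa using h) hij').mono (C.I_append_subset _ _) (C.I_append_subset _ _)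

/-- A set of points of `C` that is shorter than all gaps above level `n` lies in one basic interval
of level `n`. -/
lemma exists_I_superset {E : Set ℝ} (hE : E ⊆ C.core) {d : ℝ}
    (hd : ∀ x ∈ E, ∀ y ∈ E, y - x ≤ d) (n : ℕ)
    (hgap : ∀ j : List Bool, j.length < n → d < C.gapLen j) :
    ∃ j : List Bool, j.length = n ∧ E ⊆ C.I j := by
  induction n with
  | zero => exact ⟨[], rfl, fun x hx => (hE hx).1⟩
  | succ n ih =>
    obtain ⟨j, hj, hEj⟩ := ih fun j hj => hgap j (by omega)
    have hch : ∀ x ∈ E, x ∈ C.I (j ++ [false]) ∨ x ∈ C.I (j ++ [true]) := by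
      intro x hx
      obtain ⟨h, hh⟩ := mem_child_of_mem_core (hE hx) (hEj hx)
      cases h
      · exact Or.inl hh
      · exact Or.inr hh
    by_cases h0 : E ⊆ C.I (j ++ [false])
    · exact ⟨_, by simp [hj], h0⟩
    · obtain ⟨y, hy, hy0⟩ := Set.not_subset.1 h0
      have hy1 := (hch y hy).resolve_left hy0
      refine ⟨j ++ [true], by simp [hj], fun x hx => (hch x hx).resolve_left fun hx0 => ?_⟩
      have h1 := hgap j (by omega)
      have h2 := hd x hx y hy
      have h3 := hx0.2
      have h4 := hy1.1
      unfold gapLen at h1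
      linarith

/-- The bound `g (|I|) ≥ (2q - r) ν (I ∩ J)` for short intervals `I = [s, t]`: the part of `C` in
`I ∩ J` is contained in an interval with basic intervals at both ends that is arbitrarily little
longer than `I`. -/
lemma cover_interval_bound {ν : Measure ℝ} (hν : C.IsCantorMeasure ν) {g : ℝ → ℝ}
    (hpos : ∀ t, 0 < t → 0 < g t)
    (hmono : ∀ s t, 0 < s → s ≤ t → g s ≤ g t)
    (hconc : ConcaveOn ℝ (Set.Ioi 0) g) {q r : ℝ} (hdec : C.GapsDecrease)
    (hlen : ∀ i j : List Bool, j.length = i.length → bval j ≤ bval i → C.len i ≤ C.len j)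
    (hqr : r ≤ 2 * q) {s t u v : ℝ} (hst : s < t) (n : ℕ)
    (hgap : ∀ j : List Bool, j.length < n → t - s < C.gapLen j)
    (hgood : ∀ j : List Bool, j.length = n → (C.I j ∩ Icc u v).Nonempty → C.Good g q r j) :
    (2 * q - r) * ν.real (Icc s t ∩ Icc u v ∩ C.core) ≤ g (t - s) := by
  have := hν.1
  set E := Icc s t ∩ Icc u v ∩ C.core with hE
  rcases E.eq_empty_or_nonempty with hE0 | hne
  · rw [hE0, measureReal_empty, mul_zero]
    exact (hpos _ (sub_pos.2 hst)).le
  have hEc : IsCompact E :=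
    isCompact_core.inter_left (isClosed_Icc.inter isClosed_Icc)
  obtain ⟨j, hjn, hEj⟩ := exists_I_superset (C := C) (E := E) (fun x hx => hx.2)
    (fun x hx y hy => sub_le_sub hy.1.1.2 hx.1.1.1) n hgap
  have hj : C.Good g q r j := by
    obtain ⟨z, hz⟩ := hne
    exact hgood j hjn ⟨z, hEj hz, hz.1.2⟩
  obtain ⟨x₀, hx₀⟩ := hEc.exists_isLeast hne
  obtain ⟨y₀, hy₀⟩ := hEc.exists_isGreatest hne
  have key : ∀ η : ℝ, 0 < η → (2 * q - r) * ν.real E ≤ g (t - s + 2 * η) := by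
    intro η hη
    obtain ⟨m, hm⟩ := C.shrink η hη
    obtain ⟨w, hw, hxw⟩ := exists_word_of_mem_core hx₀.1.2 (hEj hx₀.1) m
    obtain ⟨w', hw', hyw⟩ := exists_word_of_mem_core hy₀.1.2 (hEj hy₀.1) m
    have hxy : x₀ ≤ y₀ := hx₀.2 hy₀.1
    obtain ⟨h1, h2⟩ := interval_bound hν hmono hconc hdec hlen hqr w w' j (by rw [hw, hw']) hj
      ((hxw.1.trans hxy).trans hyw.2)
    have h3 : ν.real E ≤ ν.real (Icc (C.a (j ++ w)) (C.b (j ++ w'))) :=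
      measureReal_mono fun z hz =>
        ⟨hxw.1.trans (hx₀.2 hz), (hy₀.2 hz).trans hyw.2⟩
    refine ((mul_le_mul_of_nonneg_left h3 (sub_nonneg.2 hqr)).trans h2).trans
      (hmono _ _ h1 ?_)
    have h4 := hm (j ++ w) (by simp [hw])
    have h5 := hm (j ++ w') (by simp [hw'])
    have h6 := hx₀.1.1.1.1
    have h7 := hy₀.1.1.1.2
    have h8 := hxw.2
    have h9 := hyw.1
    linarith
  have hcont : Tendsto (fun η : ℝ => g (t - s + 2 * η)) (nhdsWithin 0 (Ioi 0)) (nhds (g (t - s))) := by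
    have h1 : ContinuousAt g (t - s) :=
      (hconc.continuousOn isOpen_Ioi).continuousAt (Ioi_mem_nhds (sub_pos.2 hst))
    have h2 : Tendsto (fun η : ℝ => t - s + 2 * η) (nhds 0) (nhds (t - s)) := by
      have : Continuous fun η : ℝ => t - s + 2 * η := by fun_prop
      simpa using this.tendsto 0
    exact (h1.tendsto.comp h2).mono_left nhdsWithin_le_nhds
  exact ge_of_tendsto hcont (eventually_mem_nhdsWithin.mono fun η hη => key η hη)

end CantorConstruction

/-- An upper bound for `μ_h` from finite covers; the remaining terms of a cover indexed by `ℕ` are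
filled up with intervals on which `g` is tiny. -/
lemma muH_le_of_finite_covers {g : ℝ → ℝ} (hlim : Tendsto g (nhdsWithin 0 (Ioi 0)) (nhds 0))
    {E : Set ℝ} {B : ℝ≥0∞}
    (h : ∀ δ > 0, ∀ B' > B, ∃ (ι : Type) (_ : Fintype ι) (p : ι → ℝ × ℝ),
      (∀ i, 0 < (p i).2 ∧ (p i).2 ≤ δ) ∧ E ⊆ ⋃ i, Iv (p i).1 (p i).2 ∧
      ∑ i, ENNReal.ofReal (g (p i).2) ≤ B') :
    muH (fun _ δ => g δ) E ≤ B := by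
  refine iSup₂_le fun δ hδ => ?_
  refine le_of_forall_gt fun B'' hB'' => ?_
  obtain ⟨B', hB', hBB⟩ := exists_between hB''
  obtain ⟨ι, _, p, hp, hE, hsum⟩ := h δ hδ B' hB'
  obtain ⟨ε', hε', hεsum⟩ := ENNReal.exists_pos_sum_of_countable' (tsub_pos_of_lt hBB).ne' ℕ
  have htiny : ∀ n : ℕ, ∃ d : ℝ, (0 < d ∧ d ≤ δ) ∧ ENNReal.ofReal (g d) ≤ ε' n := by
    intro n
    have h1 : Tendsto (fun d => ENNReal.ofReal (g d)) (nhdsWithin 0 (Ioi 0)) (nhds 0) := by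
      simpa [Function.comp_def] using (ENNReal.continuous_ofReal.tendsto 0).comp hlim
    have h2 := h1.eventually (Iic_mem_nhds (hε' n))
    have h3 : ∀ᶠ d : ℝ in nhdsWithin 0 (Ioi 0), d ∈ Ioc 0 δ := Ioc_mem_nhdsGT hδ
    obtain ⟨d, hd1, hd2⟩ := (h2.and h3).exists
    exact ⟨d, hd2, hd1⟩
  choose d hd hdε using htiny
  let f : ι ⊕ ℕ → ℝ × ℝ := Sum.elim p fun n => (0, d n)
  have : Countable ι := Finite.to_countable
  obtain ⟨e⟩ : Nonempty (ℕ ≃ ι ⊕ ℕ) := by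
    obtain ⟨_⟩ := nonempty_denumerable (ι ⊕ ℕ)
    exact ⟨(Denumerable.eqv _).symm⟩
  have hc1 : ∀ k, 0 < (f (e k)).2 ∧ (f (e k)).2 ≤ δ := by
    intro k
    rcases e k with i | n
    · exact hp i
    · exact hd n
  have hc2 : E ⊆ ⋃ k, Iv (f (e k)).1 (f (e k)).2 := by
    refine hE.trans (iUnion_subset fun i => ?_)
    refine subset_iUnion_of_subset (e.symm (Sum.inl i)) ?_
    simp [f]
  refine lt_of_le_of_lt (iInf₂_le (fun k => f (e k)) ⟨hc1, hc2⟩) ?_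
  have h1 : ∑' k, ENNReal.ofReal (g (f (e k)).2) = ∑' x, ENNReal.ofReal (g (f x).2) :=
    e.tsum_eq fun x => ENNReal.ofReal (g (f x).2)
  rw [h1, Summable.tsum_sum ENNReal.summable ENNReal.summable, tsum_fintype]
  simp only [f, Sum.elim_inl, Sum.elim_inr]
  have h2 : ∑' n, ENNReal.ofReal (g (d n)) < B'' - B' :=
    (ENNReal.tsum_le_tsum hdε).trans_lt hεsum
  have h3 : B' ≠ ⊤ := hBB.ne_top
  calc _ ≤ B' + ∑' n, ENNReal.ofReal (g (d n)) := by gcongr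
    _ < B' + (B'' - B') := by gcongr
    _ = B'' := add_tsub_cancel_of_le hBB.le

/-! ### The two estimates for `μ_h` -/

/-- corollary. If the gauge function has the form `h(w,δ) = g(δ)` with
`g` concave, the Cantor set has Lebesgue measure zero, the gap sequence is decreasing
(`|G_l^k| ≤ |G_{l'}^{k'}|` whenever `2^{k'} + l' < 2^k + l`), and
`q·ν(I_j) ≤ g(|I_j|) ≤ r·ν(I_j)` for all long enough `j` with `I_j ⊆ (1+ε)·J`, then
`(2q − r)·ν(J) ≤ μ_h(J ∩ C) ≤ r·ν(J)`. -/
theorem statement4 (u v : ℝ) (hu : 0 ≤ u) (huv : u ≤ v) (hv : v ≤ 1)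
    (ε : ℝ) (hε : 0 < ε)
    (g : ℝ → ℝ) (hg : IsGauge (fun _ δ => g δ)) (hconc : ConcaveOn ℝ (Set.Ioi 0) g)
    (C : CantorConstruction) (hzero : volume C.cantorSet = 0)
    (ν : Measure ℝ) (hν : C.IsCantorMeasure ν)
    (hdec : ∀ k l k' l' : ℕ, l < 2 ^ k → l' < 2 ^ k' → 2 ^ k' + l' < 2 ^ k + l →
      C.gapLen (word k l) ≤ C.gapLen (word k' l'))
    (q r : ℝ) (hq : 0 < q) (hr : 0 < r) (N : ℕ)
    (hyp : ∀ j : List Bool, N ≤ j.length →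
      C.I j ⊆ Iv ((u + v) / 2) ((1 + ε) * (v - u)) →
      q * (ν (C.I j)).toReal ≤ g (C.len j) ∧
      g (C.len j) ≤ r * (ν (C.I j)).toReal) :
    ENNReal.ofReal (2 * q - r) * ν (Set.Icc u v)
        ≤ muH (fun _ δ => g δ) (Set.Icc u v ∩ C.cantorSet) ∧
    muH (fun _ δ => g δ) (Set.Icc u v ∩ C.cantorSet)
        ≤ ENNReal.ofReal r * ν (Set.Icc u v) := by
  have := hν.1
  have hpos : ∀ t, 0 < t → 0 < g t := fun t ht => hg.2.1 0 t ht
  have hmono : ∀ s t, 0 < s → s ≤ t → g s ≤ g t := fun s t hs hst =>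
    hg.2.2.2 0 s 0 t hs (hs.trans_le hst) (Icc_subset_Icc (by linarith) (by linarith))
  have hlim : Tendsto g (nhdsWithin 0 (Ioi 0)) (nhds 0) := hg.2.2.1 0
  have hcore : ν C.coreᶜ = 0 := hν.ae_mem_core
  rcases huv.eq_or_lt with rfl | huv
  · -- `J` is a single point, so both sides vanish.
    have hJ : ν (Icc u u) = 0 := by
      refine le_antisymm ?_ bot_le
      have h1 : ν (Icc u u) ≤ ν (Icc u u ∩ C.core) := by
        rw [measure_inter_conull hcore]
      refine h1.trans ?_
      by_cases hu' : u ∈ C.core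
      · have h2 : ∀ n : ℕ, ν (Icc u u ∩ C.core) ≤ (2⁻¹ : ℝ≥0∞) ^ n := by
          intro n
          obtain ⟨w, hw, hxw⟩ := CantorConstruction.exists_word_of_mem_core hu' hu'.1 n
          rw [List.nil_append] at hxw
          rw [← hw, ← ENNReal.inv_pow, ← hν.2 w]
          refine measure_mono fun x hx => ?_
          rw [Icc_self] at hx
          rwa [mem_singleton_iff.1 hx.1]
        exact ge_of_tendsto' (ENNReal.tendsto_pow_atTop_nhds_zero_of_lt_one (by simp)) h2
      · have : Icc u u ∩ C.core = ∅ := by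
          rw [Icc_self, Set.singleton_inter_eq_empty]
          exact hu'
        rw [this, measure_empty]
    rw [hJ, mul_zero, mul_zero]
    refine ⟨bot_le, muH_le_of_finite_covers hlim fun δ hδ B' hB' => ?_⟩
    have h1 : Tendsto (fun d => ENNReal.ofReal (g d)) (nhdsWithin 0 (Ioi 0)) (nhds 0) := by
      simpa [Function.comp_def] using (ENNReal.continuous_ofReal.tendsto 0).comp hlim
    have h2 := h1.eventually (Iic_mem_nhds hB')
    have h3 : ∀ᶠ d : ℝ in nhdsWithin 0 (Ioi 0), d ∈ Ioc 0 δ := Ioc_mem_nhdsGT hδ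
    obtain ⟨d, hd1, hd2⟩ := (h2.and h3).exists
    refine ⟨Unit, inferInstance, fun _ => (u, d), fun _ => hd2, ?_, by simpa using hd1⟩
    intro x hx
    have hxu : x = u := by simpa using hx.1
    exact mem_iUnion.2 ⟨(), by constructor <;> simp only [hxu] <;> linarith [hd2.1]⟩
  -- Deep basic intervals that meet `J` lie inside `(1 + ε) J`, where the hypothesis on `g` applies.
  have hη0 : 0 < ε * (v - u) / 2 := by
    have := mul_pos hε (sub_pos.2 huv)
    linarith
  obtain ⟨N₁, hN₁⟩ := C.shrink (ε * (v - u) / 2) hη0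
  have hbound : ∀ j : List Bool, N ≤ j.length →
      C.I j ⊆ Iv ((u + v) / 2) ((1 + ε) * (v - u)) →
      q * (1 / 2) ^ j.length ≤ g (C.len j) ∧ g (C.len j) ≤ r * (1 / 2) ^ j.length := by
    intro j hj hsub
    have h1 := hyp j hj hsub
    have h2 : (ν (C.I j)).toReal = (1 / 2) ^ j.length := hν.real_I j
    rwa [h2] at h1
  have hsub : ∀ j : List Bool, N₁ ≤ j.length → (C.I j ∩ Icc u v).Nonempty →
      C.I j ⊆ Iv ((u + v) / 2) ((1 + ε) * (v - u)) := by
    rintro j hj ⟨z, hz, hz'⟩ x hx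
    have h1 := hN₁ j hj
    have e1 : (u + v) / 2 - (1 + ε) * (v - u) / 2 = u - ε * (v - u) / 2 := by ring
    have e2 : (u + v) / 2 + (1 + ε) * (v - u) / 2 = v + ε * (v - u) / 2 := by ring
    rw [Iv, e1, e2]
    constructor
    · linarith [hz.2, hz'.1, hx.1]
    · linarith [hz.1, hz'.2, hx.2]
  set M := max N N₁ with hM
  constructor
  · rcases le_or_gt (2 * q) r with hqr | hqr
    · rw [ENNReal.ofReal_of_nonpos (by linarith), zero_mul]
      exact bot_le
    have hdec' : C.GapsDecrease := hdec
    have hlen : ∀ i j : List Bool, j.length = i.length →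
        CantorConstruction.bval j ≤ CantorConstruction.bval i → C.len i ≤ C.len j :=
      fun i j h hv => CantorConstruction.len_le_of_bval_le hdec' hzero h hv
    have hgood : ∀ j : List Bool, j.length = M → (C.I j ∩ Icc u v).Nonempty →
        C.Good g q r j := fun j hj hne p =>
      hbound (j ++ p) (by rw [List.length_append]; omega)
        ((C.I_append_subset p j).trans (hsub j (by omega) hne))
    -- All gaps above level `M` are at least `γ`.
    set γ := C.gapLen (List.replicate M false) with hγ
    have hγ0 : 0 < γ := C.gapLen_pos _
    refine le_iSup₂_of_le (γ / 2) (half_pos hγ0) (le_iInf₂ fun c hc => ?_)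
    have hk : ∀ k, ENNReal.ofReal (2 * q - r) *
        ν (Icc u v ∩ C.core ∩ Iv (c k).1 (c k).2) ≤ ENNReal.ofReal (g (c k).2) := by
      intro k
      obtain ⟨h0, h1⟩ := hc.1 k
      have h2 := CantorConstruction.cover_interval_bound hν hpos hmono hconc hdec' hlen hqr.le
        (s := (c k).1 - (c k).2 / 2) (t := (c k).1 + (c k).2 / 2) (u := u) (v := v)
        (by linarith) M
        (fun j hj => by
          have h3 := hdec'.of_length_lt (i := List.replicate M false) (j := j) (by simpa using hj)
          linarith) hgood
      have e : (c k).1 + (c k).2 / 2 - ((c k).1 - (c k).2 / 2) = (c k).2 := by ring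
      rw [e] at h2
      have e2 : Icc u v ∩ C.core ∩ Iv (c k).1 (c k).2 =
          Icc ((c k).1 - (c k).2 / 2) ((c k).1 + (c k).2 / 2) ∩ Icc u v ∩ C.core := by
        rw [inter_comm, Iv, inter_assoc]
      rw [e2, ← ofReal_measureReal, ← ENNReal.ofReal_mul (by linarith)]
      exact ENNReal.ofReal_le_ofReal h2
    calc ENNReal.ofReal (2 * q - r) * ν (Icc u v)
        = ENNReal.ofReal (2 * q - r) * ν (Icc u v ∩ C.core) := by
          rw [measure_inter_conull hcore]
      _ ≤ ENNReal.ofReal (2 * q - r) * ν (⋃ k, Icc u v ∩ C.core ∩ Iv (c k).1 (c k).2) := by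
          gcongr
          intro x hx
          obtain ⟨k, hk⟩ := mem_iUnion.1
            (hc.2 ⟨hx.1, CantorConstruction.core_subset_cantorSet hx.2⟩)
          exact mem_iUnion.2 ⟨k, hx, hk⟩
      _ ≤ ENNReal.ofReal (2 * q - r) * ∑' k, ν (Icc u v ∩ C.core ∩ Iv (c k).1 (c k).2) := by
          gcongr
          exact measure_iUnion_le _
      _ = ∑' k, ENNReal.ofReal (2 * q - r) * ν (Icc u v ∩ C.core ∩ Iv (c k).1 (c k).2) :=
          ENNReal.tsum_mul_left.symm
      _ ≤ ∑' k, ENNReal.ofReal (g (c k).2) := ENNReal.tsum_le_tsum hk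
  · refine muH_le_of_finite_covers hlim fun δ hδ B' hB' => ?_
    have ht : Tendsto (fun η => ENNReal.ofReal r * ν (Metric.cthickening η (Icc u v)))
        (nhdsWithin 0 (Ioi 0)) (nhds (ENNReal.ofReal r * ν (Icc u v))) := by
      refine ENNReal.Tendsto.const_mul ?_ (Or.inr ENNReal.ofReal_ne_top)
      exact (tendsto_measure_cthickening_of_isClosed
        ⟨1, one_pos, measure_ne_top _ _⟩ isClosed_Icc).mono_left nhdsWithin_le_nhds
    have h3 : ∀ᶠ d : ℝ in nhdsWithin 0 (Ioi 0), d ∈ Ioc 0 δ := Ioc_mem_nhdsGT hδ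
    obtain ⟨η, hη1, hη2⟩ := ((ht.eventually (Iic_mem_nhds hB')).and h3).exists
    obtain ⟨N₂, hN₂⟩ := C.shrink η hη2.1
    set n := max M N₂ with hn
    -- The cover consists of the basic intervals of level `n` that meet `J`.
    let T : Set (List Bool) := {j | j.length = n ∧ (C.I j ∩ Icc u v).Nonempty}
    have hTfin : T.Finite := (List.finite_length_eq Bool n).subset fun j hj => hj.1
    have hIv : ∀ j, Iv (C.mid j) (C.len j) = C.I j := by
      intro j
      rw [Iv, CantorConstruction.I, CantorConstruction.mid, CantorConstruction.len]
      congr 1 <;> ring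
    refine ⟨T, hTfin.fintype, fun j => (C.mid j, C.len j), fun j => ⟨C.len_pos _, ?_⟩, ?_, ?_⟩
    · exact (hN₂ j (by rw [j.2.1]; exact le_max_right _ _)).le.trans hη2.2
    · rintro x ⟨hxJ, hxC⟩
      obtain ⟨j, hj, hxj⟩ := mem_iUnion₂.1 (mem_iInter.1 hxC n)
      exact mem_iUnion.2 ⟨⟨j, hj, x, hxj, hxJ⟩, by rw [hIv]; exact hxj⟩
    · let := hTfin.fintype
      have h4 : ∀ j : T, ENNReal.ofReal (g (C.len j)) ≤ ENNReal.ofReal r * ν (C.I j) := by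
        intro j
        have hjl : j.1.length = n := j.2.1
        have h5 := (hbound j (by rw [hjl]; omega) (hsub j (by rw [hjl]; omega) j.2.2)).2
        rw [← hν.real_I] at h5
        refine (ENNReal.ofReal_le_ofReal h5).trans ?_
        rw [ENNReal.ofReal_mul hr.le, ofReal_measureReal]
      calc _ ≤ ∑ j : T, ENNReal.ofReal r * ν (C.I j) := Finset.sum_le_sum fun j _ => h4 j
        _ = ENNReal.ofReal r * ν (⋃ j : T, C.I j) := by
          rw [← Finset.mul_sum, measure_iUnion, tsum_fintype]
          · intro i j hij
            exact CantorConstruction.disjoint_I (i.2.1.trans j.2.1.symm)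
              fun h => hij (Subtype.ext h)
          · exact fun j => measurableSet_Icc
        _ ≤ ENNReal.ofReal r * ν (Metric.cthickening η (Icc u v)) := by
          gcongr
          refine iUnion_subset fun j x hx => ?_
          obtain ⟨z, hz, hzJ⟩ := j.2.2
          have h6 := hN₂ j (by rw [j.2.1]; exact le_max_right _ _)
          refine Metric.mem_cthickening_of_dist_le x z η _ hzJ ?_
          rw [Real.dist_eq, abs_le]
          constructor <;> linarith [hx.1, hx.2, hz.1, hz.2]
        _ ≤ B' := hη1
end

section
/- Let {I_j} be a Cantor construction whose Cantor set has Lebesgue measure zero, i.e. |I_l^k| = Σ_{h≥0} Σ_{m=0}^{2^h−1} |G_{2^h·l+m}^{k+h}| for all k ≥ 0 and 0 ≤ l ≤ 2^k − 1. If the gap sequence is decreasing, i.e. |G_l^k| ≤ |G_{l'}^{k'}| whenever 2^{k'} + l' < 2^k + l, then the interval sequence is decreasing in the same sense: |I_l^k| ≤ |I_{l'}^{k'}| whenever 2^{k'} + l' < 2^k + l. -/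
/-!
By the measure-zero hypothesis each `|I_l^k|` is the sum over `h` of the gaps of generation
`h` inside `I_l^k`. In the linear order `2^k + l`, the `m`-th such gap has index
`2^h (2^k + l) + m`, so `2^{k'} + l' < 2^k + l` passes to the gaps with equal `h` and `m`, and
the two series compare term by term. Both series really converge: a basic interval has positive
length, so its length is not the junk value `0` of a divergent `tsum`.
-/

open MeasureTheory Set Filter
open scoped ENNReal

theorem CantorConstruction.len_pos_s8 (C : CantorConstruction) (j : List Bool) : 0 < C.len j := by
  have h0 := C.le (j ++ [false])
  have h1 := C.le (j ++ [true])
  have hd := C.disj j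
  rw [C.left0] at h0
  rw [C.right1] at h1
  unfold CantorConstruction.len
  linarith

theorem two_pow_mul_add_lt {k l h m : ℕ} (hl : l < 2 ^ k) (hm : m < 2 ^ h) :
    2 ^ h * l + m < 2 ^ (k + h) := by
  calc 2 ^ h * l + m < 2 ^ h * (l + 1) := by rw [mul_add]; omega
    _ ≤ 2 ^ h * 2 ^ k := Nat.mul_le_mul_left _ hl
    _ = 2 ^ (k + h) := by rw [pow_add, mul_comm]

/-- A basic interval has nonzero length, so the gap series computing it is summable. -/
theorem CantorConstruction.summable_gapLen (C : CantorConstruction) (k l : ℕ)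
    (h : C.len (word k l) =
      ∑' hh : ℕ, ∑ m ∈ Finset.range (2 ^ hh), C.gapLen (word (k + hh) (2 ^ hh * l + m))) :
    Summable fun hh : ℕ =>
      ∑ m ∈ Finset.range (2 ^ hh), C.gapLen (word (k + hh) (2 ^ hh * l + m)) := by
  by_contra hs
  rw [tsum_eq_zero_of_not_summable hs] at h
  exact (C.len_pos_s8 _).ne' h

/-- If the Cantor set of a construction has Lebesgue measure zero, in
the sense that `|I_l^k| = Σ_{h≥0} Σ_{m<2^h} |G^{k+h}_{2^h·l+m}|`, and the gap sequence
is decreasing (`|G_l^k| ≤ |G_{l'}^{k'}|` whenever `2^{k'} + l' < 2^k + l`), then the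
interval sequence is decreasing in the same sense. -/
theorem statement8 (C : CantorConstruction)
    (hzero : ∀ k l : ℕ, l < 2 ^ k →
      C.len (word k l) =
        ∑' hh : ℕ, ∑ m ∈ Finset.range (2 ^ hh),
          C.gapLen (word (k + hh) (2 ^ hh * l + m)))
    (hdec : ∀ k l k' l' : ℕ, l < 2 ^ k → l' < 2 ^ k' → 2 ^ k' + l' < 2 ^ k + l →
      C.gapLen (word k l) ≤ C.gapLen (word k' l')) :
    ∀ k l k' l' : ℕ, l < 2 ^ k → l' < 2 ^ k' → 2 ^ k' + l' < 2 ^ k + l →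
      C.len (word k l) ≤ C.len (word k' l') := by
  intro k l k' l' hl hl' hlt
  rw [hzero k l hl, hzero k' l' hl']
  refine Summable.tsum_le_tsum (fun h => Finset.sum_le_sum fun m hm => ?_)
    (C.summable_gapLen k l (hzero k l hl)) (C.summable_gapLen k' l' (hzero k' l' hl'))
  have hm := Finset.mem_range.mp hm
  refine hdec _ _ _ _ (two_pow_mul_add_lt hl hm) (two_pow_mul_add_lt hl' hm) ?_
  have := Nat.mul_lt_mul_of_pos_left hlt (Nat.two_pow_pos h)
  rw [mul_add, mul_add] at this
  rw [pow_add, pow_add, mul_comm (2 ^ k'), mul_comm (2 ^ k)]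
  omega
end

section
/- Fix p > 1. Let {I_j} be a Cantor construction whose Cantor set has Lebesgue measure zero, i.e. |I_l^k| = Σ_{h≥0} Σ_{m=0}^{2^h−1} |G_{2^h·l+m}^{k+h}| for all k, l, and whose gaps satisfy |G_l^k| = (2^k + l)^{−p} for all k ≥ 0 and 0 ≤ l ≤ 2^k − 1. Then for all k ≥ 0 and 0 ≤ l ≤ 2^k − 1: (2^p/(2^p − 2))·(2^k + l + 1)^{−p} ≤ |I_l^k| ≤ (2^p/(2^p − 2))·(2^k + l)^{−p}. -/
/-!
Write `N = 2 ^ k + l`. The gaps of `I_l^k` at relative depth `h` have lengths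
`(2 ^ h * N + m) ^ (-p)` for `0 ≤ m < 2 ^ h`, and each `2 ^ h * N + m` lies between `2 ^ h * N` and
`2 ^ h * (N + 1)`. Hence their total lies between `r ^ h * (N + 1) ^ (-p)` and
`r ^ h * N ^ (-p)`, where `r = 2 * 2 ^ (-p) < 1`. Summing the geometric series over `h`, with
`(1 - r)⁻¹ = 2 ^ p / (2 ^ p - 2)`, gives both bounds on `|I_l^k|`.
-/

open MeasureTheory Set Filter
open scoped ENNReal

/-- The geometric series of ratio `2 ^ (1 - p)`, which sums to the constant of the estimate. -/
lemma hasSum_geom (p : ℝ) (hp : 1 < p) (c : ℝ) :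
    HasSum (fun h : ℕ => (2 * (2 : ℝ) ^ (-p)) ^ h * c) ((2 : ℝ) ^ p / ((2 : ℝ) ^ p - 2) * c) := by
  have h2 : (2 : ℝ) < 2 ^ p := by
    simpa using Real.rpow_lt_rpow_of_exponent_lt (by norm_num : (1 : ℝ) < 2) hp
  have hr : 2 * (2 : ℝ) ^ (-p) = 2 / 2 ^ p := by
    rw [Real.rpow_neg (by norm_num), div_eq_mul_inv]
  have hpos : (0 : ℝ) < 2 ^ p := by positivity
  have hsum := hasSum_geometric_of_lt_one (r := 2 * (2 : ℝ) ^ (-p)) (by positivity)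
    (by rw [hr, div_lt_one hpos]; exact h2)
  have he : (1 - 2 * (2 : ℝ) ^ (-p))⁻¹ = (2 : ℝ) ^ p / ((2 : ℝ) ^ p - 2) := by
    rw [hr, one_sub_div hpos.ne', inv_div]
  rw [he] at hsum
  exact hsum.mul_right c

lemma two_pow_mul_rpow (p : ℝ) (h : ℕ) {x : ℝ} (hx : 0 ≤ x) :
    (2 : ℝ) ^ h * (2 ^ h * x) ^ (-p) = (2 * (2 : ℝ) ^ (-p)) ^ h * x ^ (-p) := by
  rw [Real.mul_rpow (by positivity) hx, mul_pow, Real.rpow_pow_comm (by norm_num)]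
  ring

/-- Each of the `2 ^ h` terms is at most the value at `m = 0`. -/
lemma level_sum_le (p : ℝ) (hp : 0 ≤ p) (h : ℕ) {N : ℝ} (hN : 0 < N) :
    ∑ m ∈ Finset.range (2 ^ h), (2 ^ h * N + m : ℝ) ^ (-p)
      ≤ (2 * (2 : ℝ) ^ (-p)) ^ h * N ^ (-p) := by
  rw [← two_pow_mul_rpow p h hN.le]
  have key := Finset.sum_le_card_nsmul (Finset.range (2 ^ h))
    (fun m : ℕ => (2 ^ h * N + m : ℝ) ^ (-p)) ((2 ^ h * N) ^ (-p)) fun m _ =>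
      Real.rpow_le_rpow_of_nonpos (by positivity) (le_add_of_nonneg_right m.cast_nonneg)
        (by linarith)
  simpa using key

/-- Each of the `2 ^ h` terms is at least the value at `m = 2 ^ h`. -/
lemma le_level_sum (p : ℝ) (hp : 0 ≤ p) (h : ℕ) {N : ℝ} (hN : 0 < N) :
    (2 * (2 : ℝ) ^ (-p)) ^ h * (N + 1) ^ (-p)
      ≤ ∑ m ∈ Finset.range (2 ^ h), (2 ^ h * N + m : ℝ) ^ (-p) := by
  rw [← two_pow_mul_rpow p h (by linarith : 0 ≤ N + 1)]
  have key := Finset.card_nsmul_le_sum (Finset.range (2 ^ h))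
    (fun m : ℕ => (2 ^ h * N + m : ℝ) ^ (-p)) ((2 ^ h * (N + 1)) ^ (-p)) fun m hm => by
      have hm' : (m : ℝ) ≤ 2 ^ h := by exact_mod_cast (Finset.mem_range.mp hm).le
      exact Real.rpow_le_rpow_of_nonpos (by positivity) (by linarith) (by linarith)
  simpa using key

/-- For the Cantor set `C_p` with gap lengths
`|G_l^k| = (2^k + l)^{-p}` (`p > 1`) and Lebesgue-null Cantor set,
`(2^p/(2^p − 2))·(2^k + l + 1)^{−p} ≤ |I_l^k| ≤ (2^p/(2^p − 2))·(2^k + l)^{−p}`. -/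
theorem statement11 (p : ℝ) (hp : 1 < p) (C : CantorConstruction)
    (hzero : ∀ k l : ℕ, l < 2 ^ k →
      C.len (word k l) =
        ∑' hh : ℕ, ∑ m ∈ Finset.range (2 ^ hh),
          C.gapLen (word (k + hh) (2 ^ hh * l + m)))
    (hgap : ∀ k l : ℕ, l < 2 ^ k →
      C.gapLen (word k l) = ((2 ^ k + l : ℝ)) ^ (-p)) :
    ∀ k l : ℕ, l < 2 ^ k →
      (2 : ℝ) ^ p / ((2 : ℝ) ^ p - 2) * ((2 ^ k + l + 1 : ℝ)) ^ (-p)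
          ≤ C.len (word k l) ∧
      C.len (word k l)
          ≤ (2 : ℝ) ^ p / ((2 : ℝ) ^ p - 2) * ((2 ^ k + l : ℝ)) ^ (-p) := by
  intro k l hl
  have hN : (0 : ℝ) < 2 ^ k + l := by positivity
  have hp0 : 0 ≤ p := by linarith
  have hlevel : ∀ h : ℕ,
      ∑ m ∈ Finset.range (2 ^ h), C.gapLen (word (k + h) (2 ^ h * l + m))
        = ∑ m ∈ Finset.range (2 ^ h), (2 ^ h * (2 ^ k + l : ℝ) + m) ^ (-p) := by
    intro h
    refine Finset.sum_congr rfl fun m hm => ?_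
    have hlt : 2 ^ h * l + m < 2 ^ (k + h) := by
      calc 2 ^ h * l + m < 2 ^ h * l + 2 ^ h := by
            have := Finset.mem_range.mp hm
            omega
        _ = 2 ^ h * (l + 1) := by ring
        _ ≤ 2 ^ h * 2 ^ k := Nat.mul_le_mul_left _ hl
        _ = 2 ^ (k + h) := by ring
    rw [hgap _ _ hlt]
    congr 1
    push_cast
    ring
  rw [hzero k l hl, tsum_congr hlevel]
  have hup := hasSum_geom p hp ((2 ^ k + l : ℝ) ^ (-p))
  have hlo := hasSum_geom p hp ((2 ^ k + l + 1 : ℝ) ^ (-p))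
  have hs : Summable fun h : ℕ =>
      ∑ m ∈ Finset.range (2 ^ h), (2 ^ h * (2 ^ k + l : ℝ) + m) ^ (-p) :=
    Summable.of_nonneg_of_le (fun h => Finset.sum_nonneg fun m _ => by positivity)
      (fun h => level_sum_le p hp0 h hN) hup.summable
  exact ⟨hasSum_le (fun h => le_level_sum p hp0 h hN) hlo hs.hasSum,
    hasSum_le (fun h => level_sum_le p hp0 h hN) hs.hasSum hup⟩
end

section
/- Fix p > 1. Let {I_j} be a Cantor construction whose Cantor set has Lebesgue measure zero, i.e. |I_l^k| = Σ_{h≥0} Σ_{m=0}^{2^h−1} |G_{2^h·l+m}^{k+h}| for all k, l, and whose gaps satisfy |G_l^k| = (2^k + l)^{−p}, and let ν be its Cantor measure (so ν(I_{l'}^{k'}) = 2^{−k'}). Then for any two basic intervals with I_{l'}^{k'} ⊆ I_l^k one has (2/(2^p − 2)^{1/p})·(1 + (l+1)/2^k)^{−1}·ν(I_{l'}^{k'}) ≤ |I_{l'}^{k'}|^{1/p} ≤ (2/(2^p − 2)^{1/p})·(1 + l/2^k)^{−1}·ν(I_{l'}^{k'}). -/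
/-!
For every basic interval, `|I_l^k|` is the sum over `h` of the `2^h` gap lengths
`(2^(k+h) + 2^h l + m)^(-p)`, `0 ≤ m < 2^h`. Each of these lies between
`(2^h (2^k + l + 1))^(-p)` and `(2^h (2^k + l))^(-p)`, so comparison with the geometric series
of ratio `2 * 2^(-p) < 1` gives
`2^p/(2^p - 2) * (2^k + l + 1)^(-p) ≤ |I_l^k| ≤ 2^p/(2^p - 2) * (2^k + l)^(-p)`
(`len_bounds`). Taking `p`-th roots and using `ν(I_l^k) = 2^(-k)` yields the claim when the two
intervals coincide.

In general, `I_{l'}^{k'} ⊆ I_l^k` forces `k ≤ k'` by comparing `ν`-measures, and then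
`2^(k'-k) l ≤ l' < 2^(k'-k) (l+1)`, because basic intervals of a common level are disjoint
(`b_lt_a`) and `I_{l'}^{k'}` lies in the one at position `l' / 2^(k'-k)` of level `k`
(`word_sub`). Hence `l/2^k ≤ l'/2^k'` and `(l'+1)/2^k' ≤ (l+1)/2^k`, and the bounds for
`I_{l'}^{k'}` transfer.
-/

open MeasureTheory Set Filter
open scoped ENNReal

lemma word_length (k l : ℕ) : (word k l).length = k := by
  induction k generalizing l with
  | zero => rfl
  | succ k ih => simp [word, ih]

lemma child_sub (C : CantorConstruction) (j : List Bool) (c : Bool) :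
    C.a j ≤ C.a (j ++ [c]) ∧ C.b (j ++ [c]) ≤ C.b j := by
  cases c
  · exact ⟨(C.left0 j).ge, C.sub0 j⟩
  · exact ⟨C.sub1 j, (C.right1 j).le⟩

/-- The ancestor of `I_l^(k+h)` at level `k` sits at position `l / 2^h`. -/
lemma word_sub (C : CantorConstruction) (k h l : ℕ) :
    C.a (word k (l / 2 ^ h)) ≤ C.a (word (k + h) l) ∧
      C.b (word (k + h) l) ≤ C.b (word k (l / 2 ^ h)) := by
  induction h generalizing l with
  | zero => simp
  | succ h ih =>
    have h1 := child_sub C (word (k + h) (l / 2)) (decide (l % 2 = 1))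
    have h2 := ih (l / 2)
    rw [Nat.div_div_eq_div_mul, ← pow_succ'] at h2
    exact ⟨h2.1.trans h1.1, h1.2.trans h2.2⟩

/-- Basic intervals of one level are disjoint and ordered by position. -/
lemma b_lt_a (C : CantorConstruction) (k l l' : ℕ) (hl' : l' < 2 ^ k) (h : l < l') :
    C.b (word k l) < C.a (word k l') := by
  induction k generalizing l l' with
  | zero => simp at hl'; omega
  | succ k ih =>
    have h1 := child_sub C (word k (l / 2)) (decide (l % 2 = 1))
    have h2 := child_sub C (word k (l' / 2)) (decide (l' % 2 = 1))
    rw [pow_succ] at hl'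
    rcases Nat.lt_or_ge (l / 2) (l' / 2) with h3 | h3
    · exact h1.2.trans_lt ((ih _ _ (by omega) h3).trans_le h2.1)
    · have e : l / 2 = l' / 2 := by omega
      have e0 : l % 2 = 0 := by omega
      have e1 : l' % 2 = 1 := by omega
      simpa [word, e, e0, e1] using C.disj (word k (l' / 2))

lemma ratio_lt_one {p : ℝ} (hp : 1 < p) : 2 * (2 : ℝ) ^ (-p) < 1 := by
  have h : (2 : ℝ) ^ (-p) < 2 ^ (-1 : ℝ) :=
    Real.rpow_lt_rpow_of_exponent_lt (by norm_num) (by linarith)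
  rw [Real.rpow_neg_one] at h
  linarith

lemma two_rpow_neg_pow (p A : ℝ) (hA : 0 ≤ A) (h : ℕ) :
    ((2 : ℝ) ^ h * A) ^ (-p) = ((2 : ℝ) ^ (-p)) ^ h * A ^ (-p) := by
  rw [Real.mul_rpow (by positivity) hA, ← Real.rpow_natCast, ← Real.rpow_natCast,
    ← Real.rpow_mul (by norm_num), ← Real.rpow_mul (by norm_num), mul_comm (h : ℝ)]

/-- The length of a basic interval is squeezed between two geometric series of ratio
`2 * 2^(-p)`. -/
lemma len_bounds (p : ℝ) (hp : 1 < p) (C : CantorConstruction)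
    (hzero : ∀ k l : ℕ, l < 2 ^ k →
      C.len (word k l) =
        ∑' hh : ℕ, ∑ m ∈ Finset.range (2 ^ hh),
          C.gapLen (word (k + hh) (2 ^ hh * l + m)))
    (hgap : ∀ k l : ℕ, l < 2 ^ k →
      C.gapLen (word k l) = ((2 ^ k + l : ℝ)) ^ (-p))
    (k l : ℕ) (hl : l < 2 ^ k) :
    (1 - 2 * (2 : ℝ) ^ (-p))⁻¹ * ((2 : ℝ) ^ k + l + 1) ^ (-p) ≤ C.len (word k l) ∧
      C.len (word k l) ≤ (1 - 2 * (2 : ℝ) ^ (-p))⁻¹ * ((2 : ℝ) ^ k + l) ^ (-p) := by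
  have hr0 : 0 ≤ 2 * (2 : ℝ) ^ (-p) := by positivity
  have hgeo := hasSum_geometric_of_lt_one hr0 (ratio_lt_one hp)
  have hU := hgeo.mul_right (((2 : ℝ) ^ k + l) ^ (-p))
  have hL := hgeo.mul_right (((2 : ℝ) ^ k + l + 1) ^ (-p))
  have key : ∀ h m : ℕ, m < 2 ^ h →
      ((2 : ℝ) ^ (-p)) ^ h * ((2 : ℝ) ^ k + l + 1) ^ (-p)
          ≤ C.gapLen (word (k + h) (2 ^ h * l + m)) ∧
        C.gapLen (word (k + h) (2 ^ h * l + m))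
          ≤ ((2 : ℝ) ^ (-p)) ^ h * ((2 : ℝ) ^ k + l) ^ (-p) := by
    intro h m hm
    have hlt : 2 ^ h * l + m < 2 ^ (k + h) := by
      have : 2 ^ h * (l + 1) ≤ 2 ^ h * 2 ^ k := Nat.mul_le_mul_left _ hl
      rw [pow_add]
      nlinarith
    have hm' : (m : ℝ) ≤ 2 ^ h := by exact_mod_cast hm.le
    rw [hgap _ _ hlt, ← two_rpow_neg_pow _ _ (by positivity),
      ← two_rpow_neg_pow _ _ (by positivity)]
    push_cast
    rw [pow_add]
    constructor
    · apply Real.rpow_le_rpow_of_nonpos (by positivity) _ (by linarith)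
      nlinarith
    · apply Real.rpow_le_rpow_of_nonpos (by positivity) _ (by linarith)
      have : (0 : ℝ) ≤ m := by positivity
      nlinarith
  have hlow : ∀ h : ℕ, (2 * (2 : ℝ) ^ (-p)) ^ h * ((2 : ℝ) ^ k + l + 1) ^ (-p)
      ≤ ∑ m ∈ Finset.range (2 ^ h), C.gapLen (word (k + h) (2 ^ h * l + m)) := by
    intro h
    have := Finset.card_nsmul_le_sum (Finset.range (2 ^ h))
      (fun m => C.gapLen (word (k + h) (2 ^ h * l + m))) _
      (fun m hm => (key h m (Finset.mem_range.1 hm)).1)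
    simpa [mul_pow, mul_assoc] using this
  have hupp : ∀ h : ℕ, ∑ m ∈ Finset.range (2 ^ h), C.gapLen (word (k + h) (2 ^ h * l + m))
      ≤ (2 * (2 : ℝ) ^ (-p)) ^ h * ((2 : ℝ) ^ k + l) ^ (-p) := by
    intro h
    have := Finset.sum_le_card_nsmul (Finset.range (2 ^ h))
      (fun m => C.gapLen (word (k + h) (2 ^ h * l + m))) _
      (fun m hm => (key h m (Finset.mem_range.1 hm)).2)
    simpa [mul_pow, mul_assoc] using this
  have hs : Summable fun h : ℕ =>
      ∑ m ∈ Finset.range (2 ^ h), C.gapLen (word (k + h) (2 ^ h * l + m)) :=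
    Summable.of_nonneg_of_le (fun h => le_trans (by positivity) (hlow h)) hupp hU.summable
  rw [hzero k l hl]
  exact ⟨hasSum_le hlow hL hs.hasSum, hasSum_le hupp hs.hasSum hU⟩

lemma root_eq (p : ℝ) (hp : 1 < p) (A : ℝ) (hA : 0 < A) :
    ((1 - 2 * (2 : ℝ) ^ (-p))⁻¹ * A ^ (-p)) ^ (1 / p)
      = 2 / ((2 : ℝ) ^ p - 2) ^ (1 / p) * A⁻¹ := by
  have hr := ratio_lt_one hp
  have h2 : (0 : ℝ) < 2 ^ p := by positivity
  have hne : p ≠ 0 := by linarith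
  have e : (1 - 2 * (2 : ℝ) ^ (-p))⁻¹ = 2 ^ p / ((2 : ℝ) ^ p - 2) := by
    rw [Real.rpow_neg (by norm_num), ← one_div_div]
    field_simp
  have hpos : (0 : ℝ) < 2 ^ p - 2 := by
    rw [Real.rpow_neg (by norm_num)] at hr
    have : 2 * ((2 : ℝ) ^ p)⁻¹ * 2 ^ p < 1 * 2 ^ p := by gcongr
    rw [mul_assoc, inv_mul_cancel₀ h2.ne'] at this
    linarith
  rw [e, Real.mul_rpow (by positivity) (by positivity), Real.div_rpow h2.le hpos.le,
    ← Real.rpow_mul (by norm_num), ← Real.rpow_mul hA.le, mul_one_div_cancel hne, Real.rpow_one,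
    neg_mul, mul_one_div_cancel hne, Real.rpow_neg_one]

/-- The inclusion of basic intervals `I_{l'}^{k'} ⊆ I_l^k` in terms of indices. -/
lemma index_of_sub (C : CantorConstruction) (ν : Measure ℝ) (hν : C.IsCantorMeasure ν)
    (k l k' l' : ℕ) (hl : l < 2 ^ k) (hl' : l' < 2 ^ k')
    (hsub : C.I (word k' l') ⊆ C.I (word k l)) :
    ∃ h, k' = k + h ∧ 2 ^ h * l ≤ l' ∧ l' + 1 ≤ 2 ^ h * (l + 1) := by
  have hk : k ≤ k' := by
    have h1 := measure_mono (μ := ν) hsub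
    rw [hν.2, hν.2, word_length, word_length, ENNReal.inv_le_inv] at h1
    have h2 : (2 : ℕ) ^ k ≤ 2 ^ k' := by exact_mod_cast h1
    exact (Nat.pow_le_pow_iff_right (by norm_num)).1 h2
  obtain ⟨h, rfl⟩ := Nat.exists_eq_add_of_le hk
  obtain ⟨s1, s2⟩ := word_sub C k h l'
  have hx : C.a (word (k + h) l') ∈ C.I (word k l) := hsub ⟨le_rfl, C.le _⟩
  have hle := C.le (word (k + h) l')
  have hq : l' / 2 ^ h < 2 ^ k := by
    rw [Nat.div_lt_iff_lt_mul (by positivity), ← pow_add]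
    exact hl'
  have e : l' / 2 ^ h = l := by
    rcases Nat.lt_trichotomy (l' / 2 ^ h) l with h1 | h1 | h1
    · have := b_lt_a C k _ _ hl h1
      linarith [hx.1]
    · exact h1
    · have := b_lt_a C k _ _ hq h1
      linarith [hx.2]
  refine ⟨h, rfl, ?_, ?_⟩
  · rw [← e]; exact Nat.mul_div_le _ _
  · rw [← e]; exact Nat.lt_mul_div_succ l' (by positivity)

/-- For the Cantor set `C_p` with gap lengths
`|G_l^k| = (2^k + l)^{-p}` (`p > 1`), Lebesgue-null Cantor set, and Cantor measure `ν`,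
if `I_{l'}^{k'} ⊆ I_l^k` then
`(2/(2^p − 2)^{1/p})·(1 + (l+1)/2^k)⁻¹·ν(I_{l'}^{k'}) ≤ |I_{l'}^{k'}|^{1/p}
  ≤ (2/(2^p − 2)^{1/p})·(1 + l/2^k)⁻¹·ν(I_{l'}^{k'})`. -/
theorem statement12 (p : ℝ) (hp : 1 < p) (C : CantorConstruction)
    (hzero : ∀ k l : ℕ, l < 2 ^ k →
      C.len (word k l) =
        ∑' hh : ℕ, ∑ m ∈ Finset.range (2 ^ hh),
          C.gapLen (word (k + hh) (2 ^ hh * l + m)))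
    (hgap : ∀ k l : ℕ, l < 2 ^ k →
      C.gapLen (word k l) = ((2 ^ k + l : ℝ)) ^ (-p))
    (ν : Measure ℝ) (hν : C.IsCantorMeasure ν)
    (k l k' l' : ℕ) (hl : l < 2 ^ k) (hl' : l' < 2 ^ k')
    (hsub : C.I (word k' l') ⊆ C.I (word k l)) :
    2 / ((2 : ℝ) ^ p - 2) ^ (1 / p) * (1 + ((l : ℝ) + 1) / 2 ^ k)⁻¹ *
        (ν (C.I (word k' l'))).toReal
      ≤ C.len (word k' l') ^ (1 / p) ∧
    C.len (word k' l') ^ (1 / p)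
      ≤ 2 / ((2 : ℝ) ^ p - 2) ^ (1 / p) * (1 + (l : ℝ) / 2 ^ k)⁻¹ *
          (ν (C.I (word k' l'))).toReal := by
  have hp0 : 0 ≤ 1 / p := by positivity
  obtain ⟨hlo, hup⟩ := len_bounds p hp C hzero hgap k' l' hl'
  have hν' : (ν (C.I (word k' l'))).toReal = ((2 : ℝ) ^ k')⁻¹ := by
    rw [hν.2, word_length]; simp
  obtain ⟨h, rfl, i1, i2⟩ := index_of_sub C ν hν k l k' l' hl hl' hsub
  have i1' : (2 : ℝ) ^ h * l ≤ l' := by exact_mod_cast i1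
  have i2' : (l' : ℝ) + 1 ≤ 2 ^ h * (l + 1) := by exact_mod_cast i2
  have hr : 0 < (1 - 2 * (2 : ℝ) ^ (-p))⁻¹ := inv_pos.2 (by linarith [ratio_lt_one hp])
  have hlo' := Real.rpow_le_rpow (by positivity) hlo hp0
  have hup' := Real.rpow_le_rpow (le_trans (by positivity) hlo) hup hp0
  rw [root_eq p hp _ (by positivity)] at hlo' hup'
  have hc : 0 ≤ 2 / ((2 : ℝ) ^ p - 2) ^ (1 / p) := by
    have : (2 : ℝ) ^ (1 : ℝ) ≤ 2 ^ p :=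
      Real.rpow_le_rpow_of_exponent_le (by norm_num) hp.le
    rw [Real.rpow_one] at this
    exact div_nonneg (by norm_num) (Real.rpow_nonneg (by linarith) _)
  rw [hν', mul_assoc, mul_assoc, ← mul_inv, ← mul_inv]
  have e1 : (1 + ((l : ℝ) + 1) / 2 ^ k) * 2 ^ (k + h) = 2 ^ (k + h) + 2 ^ h * (l + 1) := by
    rw [pow_add]; field_simp
  have e2 : (1 + (l : ℝ) / 2 ^ k) * 2 ^ (k + h) = 2 ^ (k + h) + 2 ^ h * l := by
    rw [pow_add]; field_simp
  rw [e1, e2]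
  constructor
  · refine le_trans (mul_le_mul_of_nonneg_left ?_ hc) hlo'
    exact inv_anti₀ (by positivity) (by linarith)
  · refine hup'.trans (mul_le_mul_of_nonneg_left ?_ hc)
    exact inv_anti₀ (by positivity) (by linarith)
end
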